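/- arXiv:2110.03954 — 8 statements merged into one kernel-verified Lean document; each statement's English description precedes it below -/
import Mathlib

section
/- Let g be a Lie algebra over a field K, let f ⊆ g be a K-subspace, and let β : f × f → f be a bilinear map making (f, β) a Lie algebra (β antisymmetric and satisfying the Jacobi identity). Define κ(x,y) := ⁅x,y⁆ − β(x,y) ∈ g for x, y ∈ f. Suppose Z ∈ f satisfies κ(Z, y) = 0 for all y ∈ f. Then for all X, Y ∈ f: ⁅Z, κ(X,Y)⁆ = κ(β(Z,X), Y) + κ(X, β(Z,Y)), where ⁅·,·⁆ is the bracket of g. -/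
theorem stmt2 {K : Type*} [Field K] {g : Type*} [LieRing g] [LieAlgebra K g]
    (f : Submodule K g) (β : f →ₗ[K] f →ₗ[K] f)
    (anti : ∀ x y : f, β x y = -β y x)
    (jac : ∀ x y z : f, β x (β y z) = β (β x y) z + β y (β x z))
    (κ : f → f → g) (hκ : ∀ x y : f, κ x y = ⁅(x : g), (y : g)⁆ - (β x y : g))
    (Z : f) (hZ : ∀ y : f, κ Z y = 0) :
    ∀ X Y : f, ⁅(Z : g), κ X Y⁆ = κ (β Z X) Y + κ X (β Z Y) := by
  intro X Y
  have hβ : ∀ y : f, ((β Z y : f) : g) = ⁅(Z : g), (y : g)⁆ := fun y =>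
    (sub_eq_zero.mp ((hκ Z y).symm.trans (hZ y))).symm
  have hJ : ⁅(Z : g), ((β X Y : f) : g)⁆ = (β (β Z X) Y : g) + (β X (β Z Y) : g) := by
    rw [← hβ, jac, Submodule.coe_add]
  rw [hκ, hκ, hκ, lie_sub, hJ, hβ, hβ, leibniz_lie]
  abel
end

section
/- Let N ≥ 1 be an integer. On ℝ² with coordinates (t,u), consider the N + 5 smooth vector fields ∂_t, t∂_t, t²∂_t + N t u ∂_u, u∂_u, and t^k ∂_u for k = 0, 1, …, N. These vector fields are linearly independent over ℝ, and their real span is closed under the Lie bracket of vector fields [X,Y](p) = DY(p)(X(p)) − DX(p)(Y(p)); hence they span an (N+5)-dimensional Lie subalgebra of the Lie algebra of smooth vector fields on ℝ². -/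
/-- The Lie bracket of vector fields on a real normed space:
`[X,Y](p) = DY(p)(X(p)) − DX(p)(Y(p))`. -/
noncomputable def vbracket {E : Type*} [NormedAddCommGroup E] [NormedSpace ℝ E]
    (X Y : E → E) : E → E :=
  fun p => fderiv ℝ Y p (X p) - fderiv ℝ X p (Y p)

open Polynomial in
/-- The vector field `(a + bt + ct²)∂_t + (Nctu + du + q(t))∂_u` on `ℝ²`. -/
noncomputable def quadField (N : ℕ) (a b c d : ℝ) (q : ℝ[X]) : (Fin 2 → ℝ) → (Fin 2 → ℝ) :=
  fun p => ![a + b * p 0 + c * p 0 ^ 2, N * c * p 0 * p 1 + d * p 1 + q.eval (p 0)]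

open Polynomial in
theorem fderiv_quadField (N : ℕ) (a b c d : ℝ) (q : ℝ[X]) (p v : Fin 2 → ℝ) :
    fderiv ℝ (quadField N a b c d q) p v =
      ![(b + 2 * c * p 0) * v 0,
        (N * c * p 1 + (derivative q).eval (p 0)) * v 0 + (N * c * p 0 + d) * v 1] := by
  have h0 : HasFDerivAt (fun p : Fin 2 → ℝ => p 0)
      (ContinuousLinearMap.proj (R := ℝ) (φ := fun _ : Fin 2 => ℝ) 0) p := hasFDerivAt_apply 0 p
  have h1 : HasFDerivAt (fun p : Fin 2 → ℝ => p 1)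
      (ContinuousLinearMap.proj (R := ℝ) (φ := fun _ : Fin 2 => ℝ) 1) p := hasFDerivAt_apply 1 p
  have hq := (q.hasDerivAt (p 0)).comp_hasFDerivAt p h0
  have hfst := ((h0.const_mul b).const_add a).add ((h0.pow 2).const_mul c)
  have hsnd := (((h0.const_mul (N * c)).mul h1).add (h1.const_mul d)).add hq
  have hdiff : DifferentiableAt ℝ (quadField N a b c d q) p := by
    refine differentiableAt_pi.2 fun i => ?_
    fin_cases i
    · exact hfst.differentiableAt
    · exact hsnd.differentiableAt
  have hcoord := hasFDerivAt_pi'.1 hdiff.hasFDerivAt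
  have e0 := DFunLike.congr_fun ((hcoord 0).unique hfst) v
  have e1 := DFunLike.congr_fun ((hcoord 1).unique hsnd) v
  ext i
  fin_cases i
  · simp at e0 ⊢
    rw [e0]; ring
  · simp at e1 ⊢
    rw [e1]; ring

open Polynomial in
theorem vbracket_quadField (N : ℕ) (a b c d a' b' c' d' : ℝ) (q q' : ℝ[X]) :
    vbracket (quadField N a b c d q) (quadField N a' b' c' d' q') =
      quadField N (a * b' - a' * b) (2 * (a * c' - a' * c)) (b * c' - b' * c)
        (N * (a * c' - a' * c))
        (C a * derivative q' + C b * (X * derivative q') - C d * q'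
          + C c * (X ^ 2 * derivative q' - C (N : ℝ) * (X * q'))
          - (C a' * derivative q + C b' * (X * derivative q) - C d' * q
          + C c' * (X ^ 2 * derivative q - C (N : ℝ) * (X * q)))) := by
  funext p
  ext i
  simp only [vbracket, fderiv_quadField]
  fin_cases i <;> simp [quadField] <;> ring

open Polynomial in
/-- For `deg q ≤ N`, the top coefficients of `X² q'` and `N X q` cancel. -/
theorem sq_mul_derivative_sub_mem_degreeLT {N : ℕ} {q : ℝ[X]} (hq : q ∈ degreeLT ℝ (N + 1)) :
    X ^ 2 * derivative q - C (N : ℝ) * (X * q) ∈ degreeLT ℝ (N + 1) := by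
  rw [mem_degreeLT, degree_lt_iff_coeff_zero] at hq ⊢
  rintro (_ | m) hm
  · omega
  · rw [coeff_sub, coeff_C_mul, coeff_X_mul, pow_two, mul_assoc, coeff_X_mul]
    have key : (X * derivative q).coeff m = m * q.coeff m := by
      cases m with
      | zero => simp
      | succ k => rw [coeff_X_mul, coeff_derivative]; push_cast; ring
    rw [key]
    rcases (show N ≤ m by omega).eq_or_lt with rfl | h
    · ring
    · rw [hq m h]; ring

open Polynomial in
theorem derivative_mem_degreeLT {n : ℕ} {q : ℝ[X]} (hq : q ∈ degreeLT ℝ n) :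
    derivative q ∈ degreeLT ℝ n := by
  rw [mem_degreeLT] at hq ⊢
  exact (degree_derivative_le).trans_lt hq

open Polynomial in
theorem X_mul_derivative_mem_degreeLT {n : ℕ} {q : ℝ[X]} (hq : q ∈ degreeLT ℝ n) :
    X * derivative q ∈ degreeLT ℝ n := by
  rw [mem_degreeLT, degree_lt_iff_coeff_zero] at hq ⊢
  rintro (_ | m) hm
  · simp
  · rw [coeff_X_mul, coeff_derivative, hq _ hm, zero_mul]

open Polynomial in
theorem sum_smul_eq_quadField (N : ℕ) (V : Fin (N + 5) → ((Fin 2 → ℝ) → (Fin 2 → ℝ)))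
    (hV : ∀ i : Fin (N + 5), V i = fun p =>
      if (i : ℕ) = 0 then ![1, 0]
      else if (i : ℕ) = 1 then ![p 0, 0]
      else if (i : ℕ) = 2 then ![(p 0) ^ 2, (N : ℝ) * p 0 * p 1]
      else if (i : ℕ) = 3 then ![0, p 1]
      else ![0, (p 0) ^ ((i : ℕ) - 4)]) (g : Fin (N + 5) → ℝ) :
    ∑ i, g i • V i = quadField N (g 0) (g 1) (g 2) (g 3)
      (∑ k : Fin (N + 1), monomial (k : ℕ) (g k.succ.succ.succ.succ)) := by
  have hV0 : V 0 = fun _ => ![1, 0] := hV 0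
  have hV1 : V (Fin.succ 0) = fun p => ![p 0, 0] := hV (Fin.succ 0)
  have hV2 : V (Fin.succ (Fin.succ 0)) = fun p : Fin 2 → ℝ => ![p 0 ^ 2, (N : ℝ) * p 0 * p 1] :=
    hV (Fin.succ (Fin.succ 0))
  have hV3 : V (Fin.succ (Fin.succ (Fin.succ 0))) = fun p => ![0, p 1] :=
    hV (Fin.succ (Fin.succ (Fin.succ 0)))
  have hV4 (k : Fin (N + 1)) : V k.succ.succ.succ.succ = fun p => ![0, p 0 ^ (k : ℕ)] :=
    hV k.succ.succ.succ.succ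
  have e1 : (1 : Fin (N + 5)) = Fin.succ 0 := rfl
  have e2 : (2 : Fin (N + 5)) = Fin.succ (Fin.succ 0) := rfl
  have e3 : (3 : Fin (N + 5)) = Fin.succ (Fin.succ (Fin.succ 0)) := rfl
  rw [e1, e2, e3, Fin.sum_univ_succ, Fin.sum_univ_succ, Fin.sum_univ_succ, Fin.sum_univ_succ]
  simp only [hV0, hV1, hV2, hV3, hV4]
  generalize g 0 = a, g (Fin.succ 0) = b, g (Fin.succ (Fin.succ 0)) = c,
    g (Fin.succ (Fin.succ (Fin.succ 0))) = d
  funext p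
  ext i
  fin_cases i
  · simp [quadField, Finset.sum_apply, -Matrix.smul_cons]
    ring
  · simp [quadField, Finset.sum_apply, eval_finsetSum, -Matrix.smul_cons]
    ring

open Polynomial in
theorem quadField_eq_zero {N : ℕ} {a b c d : ℝ} {q : ℝ[X]} (h : quadField N a b c d q = 0) :
    a = 0 ∧ b = 0 ∧ c = 0 ∧ d = 0 ∧ q = 0 := by
  have h0 (t u : ℝ) : a + b * t + c * t ^ 2 = 0 := by
    simpa [quadField] using congrFun (congrFun h ![t, u]) 0
  have h1 (t u : ℝ) : N * c * t * u + d * u + q.eval t = 0 := by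
    simpa [quadField] using congrFun (congrFun h ![t, u]) 1
  have ha := h0 0 0
  have hb := h0 1 0
  have hc := h0 (-1) 0
  have hq : q = 0 := Polynomial.funext fun t => by simpa using h1 t 0
  have hd := h1 0 1
  simp only [hq, eval_zero] at hd
  exact ⟨by linarith, by linarith, by linarith, by linarith, hq⟩

/-- The `N+5` vector fields `∂_t, t∂_t, t²∂_t + Ntu∂_u, u∂_u, t^k∂_u (0 ≤ k ≤ N)` on `ℝ²`
are linearly independent and span an `(N+5)`-dimensional Lie algebra of vector fields. -/
theorem stmt8 (N : ℕ) (hN : 1 ≤ N)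
    (V : Fin (N + 5) → ((Fin 2 → ℝ) → (Fin 2 → ℝ)))
    (hV : ∀ i : Fin (N + 5), V i = fun p =>
      if (i : ℕ) = 0 then ![1, 0]
      else if (i : ℕ) = 1 then ![p 0, 0]
      else if (i : ℕ) = 2 then ![(p 0) ^ 2, (N : ℝ) * p 0 * p 1]
      else if (i : ℕ) = 3 then ![0, p 1]
      else ![0, (p 0) ^ ((i : ℕ) - 4)]) :
    LinearIndependent ℝ V ∧
    (∀ X ∈ Submodule.span ℝ (Set.range V), ∀ Y ∈ Submodule.span ℝ (Set.range V),
      vbracket X Y ∈ Submodule.span ℝ (Set.range V)) ∧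
    Module.finrank ℝ (Submodule.span ℝ (Set.range V)) = N + 5 := by
  have hli : LinearIndependent ℝ V := by
    rw [Fintype.linearIndependent_iff]
    intro g hg
    rw [sum_smul_eq_quadField N V hV] at hg
    obtain ⟨h0, h1, h2, h3, hq⟩ := quadField_eq_zero hg
    have hcoeff (k : Fin (N + 1)) : g k.succ.succ.succ.succ = 0 := by
      have := congrArg (fun r : Polynomial ℝ => r.coeff k) hq
      simpa [Polynomial.finsetSum_coeff, Polynomial.coeff_monomial, Fin.val_inj] using this
    intro i
    refine Fin.cases h0 (fun i => ?_) i
    refine Fin.cases h1 (fun i => ?_) i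
    refine Fin.cases h2 (fun i => ?_) i
    exact Fin.cases h3 hcoeff i
  have hspan (Z : (Fin 2 → ℝ) → (Fin 2 → ℝ)) : Z ∈ Submodule.span ℝ (Set.range V) ↔
      ∃ a b c d : ℝ, ∃ q ∈ Polynomial.degreeLT ℝ (N + 1), Z = quadField N a b c d q := by
    rw [Submodule.mem_span_range_iff_exists_fun]
    constructor
    · rintro ⟨g, rfl⟩
      refine ⟨_, _, _, _, _, Submodule.sum_mem _ fun k _ => ?_, sum_smul_eq_quadField N V hV g⟩
      rw [Polynomial.mem_degreeLT]
      exact (Polynomial.degree_monomial_le _ _).trans_lt (by exact_mod_cast k.isLt)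
    · rintro ⟨a, b, c, d, q, hq, rfl⟩
      refine ⟨Fin.cons a (Fin.cons b (Fin.cons c (Fin.cons d fun k => q.coeff k))), ?_⟩
      rw [sum_smul_eq_quadField N V hV]
      have hsum : ∑ k : Fin (N + 1), Polynomial.monomial (k : ℕ) (q.coeff k) = q := by
        rw [Fin.sum_univ_eq_sum_range (fun k => Polynomial.monomial k (q.coeff k))]
        ext m
        rw [Polynomial.mem_degreeLT, Polynomial.degree_lt_iff_coeff_zero] at hq
        simp only [Polynomial.finsetSum_coeff, Polynomial.coeff_monomial]
        simp only [Finset.sum_ite_eq', Finset.mem_range]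
        split_ifs with hm
        · rfl
        · exact (hq m (by omega)).symm
      conv_rhs => rw [← hsum]
      rfl
  refine ⟨hli, ?_, by rw [finrank_span_eq_card hli, Fintype.card_fin]⟩
  intro X hX Y hY
  obtain ⟨a, b, c, d, q, hq, rfl⟩ := (hspan X).1 hX
  obtain ⟨a', b', c', d', q', hq', rfl⟩ := (hspan Y).1 hY
  rw [vbracket_quadField, hspan]
  refine ⟨_, _, _, _, _, ?_, rfl⟩
  have hmem (a b c d : ℝ) {r : Polynomial ℝ} (hr : r ∈ Polynomial.degreeLT ℝ (N + 1)) :=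
    add_mem (sub_mem (add_mem (Submodule.smul_mem _ a (derivative_mem_degreeLT hr))
      (Submodule.smul_mem _ b (X_mul_derivative_mem_degreeLT hr))) (Submodule.smul_mem _ d hr))
      (Submodule.smul_mem _ c (sq_mul_derivative_sub_mem_degreeLT hr))
  simp only [Polynomial.smul_eq_C_mul] at hmem
  exact sub_mem (hmem a b c d hq') (hmem a' b' c' d' hq)
end

section
/- Let N ≥ 1 and m ≥ 2 be integers. On ℝ^{1+m} with coordinates (t, u¹, …, u^m), consider the smooth vector fields: ∂_t; t∂_t; t²∂_t + N t Σ_{a=1}^m u^a ∂_{u^a}; u^a ∂_{u^b} for all 1 ≤ a, b ≤ m; and t^k ∂_{u^a} for all 0 ≤ k ≤ N, 1 ≤ a ≤ m. These m² + (N+1)m + 3 vector fields are linearly independent over ℝ and their real span is closed under the Lie bracket of vector fields; hence they span a Lie subalgebra of the Lie algebra of smooth vector fields on ℝ^{1+m} of dimension m² + (N+1)m + 3. -/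
section VectorFields

variable {ι : Type*}

lemma fderiv_eval_apply (i : ι) (p v : ι → ℝ) :
    fderiv ℝ (fun q : ι → ℝ => q i) p v = v i := by
  rw [(hasFDerivAt_apply i p).fderiv]
  rfl

lemma fderiv_eval_pow_apply [Fintype ι] (i : ι) (k : ℕ) (p v : ι → ℝ) :
    fderiv ℝ (fun q : ι → ℝ => q i ^ k) p v = k * p i ^ (k - 1) * v i := by
  rw [((hasFDerivAt_apply i p).pow k).fderiv]
  simp

lemma differentiable_single [Fintype ι] [DecidableEq ι] (i : ι) {φ : (ι → ℝ) → ℝ} (h : Differentiable ℝ φ) :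
    Differentiable ℝ (fun q => (Pi.single i (φ q) : ι → ℝ)) :=
  (ContinuousLinearMap.single ℝ (fun _ : ι => ℝ) i).differentiable.comp h

lemma fderiv_single_apply [Fintype ι] [DecidableEq ι] (i : ι) {φ : (ι → ℝ) → ℝ} (h : Differentiable ℝ φ)
    (p v : ι → ℝ) :
    fderiv ℝ (fun q => (Pi.single i (φ q) : ι → ℝ)) p v = Pi.single i (fderiv ℝ φ p v) := by
  have := ((ContinuousLinearMap.single ℝ (fun _ : ι => ℝ) i).hasFDerivAt (x := φ p)).comp p
    (h p).hasFDerivAt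
  exact congrArg (fun L => L v) this.fderiv

/-- A span of differentiable vector fields is closed under the Lie bracket as soon as the brackets
of its generators lie in it. -/
lemma vbracket_mem_span {E κ : Type*} [NormedAddCommGroup E] [NormedSpace ℝ E]
    {V : κ → E → E} (hd : ∀ i, Differentiable ℝ (V i))
    (hb : ∀ i j, vbracket (V i) (V j) ∈ Submodule.span ℝ (Set.range V))
    {X Y : E → E} (hX : X ∈ Submodule.span ℝ (Set.range V))
    (hY : Y ∈ Submodule.span ℝ (Set.range V)) :
    vbracket X Y ∈ Submodule.span ℝ (Set.range V) := by
  have hdiff : ∀ Z ∈ Submodule.span ℝ (Set.range V), Differentiable ℝ Z := by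
    intro Z hZ
    induction hZ using Submodule.span_induction with
    | mem _ h => obtain ⟨i, rfl⟩ := h; exact hd i
    | zero => exact differentiable_const 0
    | add _ _ _ _ h₁ h₂ => exact h₁.add h₂
    | smul c _ _ h => exact h.const_smul c
  induction hX using Submodule.span_induction with
  | mem _ h =>
    obtain ⟨i, rfl⟩ := h
    induction hY using Submodule.span_induction with
    | mem _ h => obtain ⟨j, rfl⟩ := h; exact hb i j
    | zero =>
      convert Submodule.zero_mem _ using 1
      exact VectorField.lieBracket_zero_right
    | add Y₁ Y₂ h₁ h₂ ih₁ ih₂ =>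
      convert Submodule.add_mem _ ih₁ ih₂ using 1
      funext p
      exact VectorField.lieBracket_add_right (hdiff _ h₁ p) (hdiff _ h₂ p)
    | smul c Y h ih =>
      convert Submodule.smul_mem _ c ih using 1
      funext p
      exact VectorField.lieBracket_const_smul_right (hdiff _ h p)
  | zero =>
    convert Submodule.zero_mem _ using 1
    exact VectorField.lieBracket_zero_left
  | add X₁ X₂ h₁ h₂ ih₁ ih₂ =>
    convert Submodule.add_mem _ ih₁ ih₂ using 1
    funext p
    exact VectorField.lieBracket_add_left (hdiff _ h₁ p) (hdiff _ h₂ p)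
  | smul c X h ih =>
    convert Submodule.smul_mem _ c ih using 1
    funext p
    exact VectorField.lieBracket_const_smul_left (hdiff _ h p)

lemma vbracket_mem_of_swap {E : Type*} [NormedAddCommGroup E] [NormedSpace ℝ E]
    {S : Submodule ℝ (E → E)} {X Y : E → E} (h : vbracket Y X ∈ S) : vbracket X Y ∈ S := by
  convert S.neg_mem h using 1
  funext p
  exact VectorField.lieBracket_swap

end VectorFields

/-- The field `t²∂_t + N t Σ u^a ∂_{u^a}`. -/
def projectiveField (N m : ℕ) : (Fin (m + 1) → ℝ) → (Fin (m + 1) → ℝ) :=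
  fun p j => if j = 0 then (p 0) ^ 2 else (N : ℝ) * p 0 * p j

lemma hasFDerivAt_projectiveField (N m : ℕ) (p : Fin (m + 1) → ℝ) :
    HasFDerivAt (projectiveField N m) (ContinuousLinearMap.pi fun j : Fin (m + 1) =>
      if j = 0 then (2 * p 0) • ContinuousLinearMap.proj (R := ℝ) (φ := fun _ => ℝ) 0
      else (N * p 0) • ContinuousLinearMap.proj (R := ℝ) (φ := fun _ => ℝ) j +
        p j • (N : ℝ) • ContinuousLinearMap.proj (R := ℝ) (φ := fun _ => ℝ) 0) p := by
  rw [hasFDerivAt_pi]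
  intro j
  by_cases hj : j = 0
  · simp only [projectiveField, hj, if_true]
    simpa using (hasFDerivAt_apply (𝕜 := ℝ) (F' := fun _ : Fin (m + 1) => ℝ) 0 p).pow 2
  · simp only [projectiveField, hj, if_false]
    exact ((hasFDerivAt_apply (𝕜 := ℝ) (F' := fun _ : Fin (m + 1) => ℝ) 0 p).const_mul
      (N : ℝ)).mul (hasFDerivAt_apply (𝕜 := ℝ) (F' := fun _ : Fin (m + 1) => ℝ) j p)

lemma fderiv_projectiveField_apply (N m : ℕ) (p v : Fin (m + 1) → ℝ) :
    fderiv ℝ (projectiveField N m) p v =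
      fun j => if j = 0 then 2 * p 0 * v 0 else N * (p 0 * v j + p j * v 0) := by
  rw [(hasFDerivAt_projectiveField N m p).fderiv]
  funext j
  by_cases hj : j = 0
  · simp [hj]
  · simp [hj]
    ring

lemma coeff_eq_zero_of_forall_sum_pow {n : ℕ} {c : Fin n → ℝ}
    (h : ∀ t : ℝ, ∑ k, c k * t ^ (k : ℕ) = 0) (k : Fin n) : c k = 0 := by
  have hP : (∑ k : Fin n, Polynomial.monomial (k : ℕ) (c k)) = 0 := by
    refine Polynomial.funext fun t => ?_
    simpa [Polynomial.eval_finsetSum] using h t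
  have := congrArg (fun P => P.coeff (k : ℕ)) hP
  simpa [Polynomial.finsetSum_coeff, Polynomial.coeff_monomial, Fin.val_inj] using this

/-- The `m² + (N+1)m + 3` vector fields `∂_t, t∂_t, t²∂_t + Nt Σ u^a∂_{u^a}, u^a∂_{u^b},
t^k∂_{u^a} (0 ≤ k ≤ N)` on `ℝ^{1+m}` are linearly independent and span a Lie algebra of
vector fields of dimension `m² + (N+1)m + 3`. -/
theorem stmt9 (N m : ℕ) (hN : 1 ≤ N) (hm : 2 ≤ m)
    (V : (Fin 3 ⊕ (Fin m × Fin m) ⊕ (Fin (N + 1) × Fin m)) →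
      ((Fin (m + 1) → ℝ) → (Fin (m + 1) → ℝ)))
    (hV0 : V (Sum.inl 0) = fun _ => Pi.single (0 : Fin (m + 1)) 1)
    (hV1 : V (Sum.inl 1) = fun p => Pi.single (0 : Fin (m + 1)) (p 0))
    (hV2 : V (Sum.inl 2) = fun p j => if j = 0 then (p 0) ^ 2 else (N : ℝ) * p 0 * p j)
    (hVab : ∀ a b : Fin m, V (Sum.inr (Sum.inl (a, b))) =
      fun p => Pi.single b.succ (p a.succ))
    (hVka : ∀ (k : Fin (N + 1)) (a : Fin m), V (Sum.inr (Sum.inr (k, a))) =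
      fun p => Pi.single a.succ ((p 0) ^ (k : ℕ))) :
    LinearIndependent ℝ V ∧
    (∀ X ∈ Submodule.span ℝ (Set.range V), ∀ Y ∈ Submodule.span ℝ (Set.range V),
      vbracket X Y ∈ Submodule.span ℝ (Set.range V)) ∧
    Module.finrank ℝ (Submodule.span ℝ (Set.range V)) = m ^ 2 + (N + 1) * m + 3 := by
  have hli : LinearIndependent ℝ V := by
    rw [Fintype.linearIndependent_iff]
    intro g hg
    have ht : ∀ p : Fin (m + 1) → ℝ,
        g (Sum.inl 0) + g (Sum.inl 1) * p 0 + g (Sum.inl 2) * p 0 ^ 2 = 0 := by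
      intro p
      have := congrFun (congrFun hg p) 0
      simpa [Fintype.sum_sum_type, Fin.sum_univ_three, hV0, hV1, hV2, hVab, hVka,
        Fintype.sum_prod_type] using this
    have hu : ∀ (p : Fin (m + 1) → ℝ) (b : Fin m),
        g (Sum.inl 2) * (N * p 0 * p b.succ) +
          (∑ a, g (Sum.inr (Sum.inl (a, b))) * p a.succ +
            ∑ k : Fin (N + 1), g (Sum.inr (Sum.inr (k, b))) * p 0 ^ (k : ℕ)) = 0 := by
      intro p b
      have := congrFun (congrFun hg p) b.succ
      simpa [Fintype.sum_sum_type, Fin.sum_univ_three, hV0, hV1, hV2, hVab, hVka,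
        Fintype.sum_prod_type, Pi.single_apply] using this
    have h0 := ht 0
    have h1 := ht 1
    have h2 := ht (-1)
    simp only [Pi.zero_apply, Pi.one_apply, Pi.neg_apply] at h0 h1 h2
    have hka : ∀ k b, g (Sum.inr (Sum.inr (k, b))) = 0 := fun k b =>
      coeff_eq_zero_of_forall_sum_pow (c := fun k => g (Sum.inr (Sum.inr (k, b))))
        (fun t => by simpa using hu (Pi.single 0 t) b) k
    rintro (i | ⟨a, b⟩ | ⟨k, a⟩)
    · fin_cases i
      · show g (Sum.inl 0) = 0
        linarith
      · show g (Sum.inl 1) = 0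
        linarith
      · show g (Sum.inl 2) = 0
        linarith
    · simpa [hka, Pi.single_apply, (Fin.succ_ne_zero _).symm] using hu (Pi.single a.succ 1) b
    · exact hka k a
  refine ⟨hli, fun X hX Y hY => vbracket_mem_span ?_ ?_ hX hY, ?_⟩
  · rintro (i | ⟨a, b⟩ | ⟨k, a⟩)
    · fin_cases i
      · exact hV0 ▸ differentiable_const _
      · exact hV1 ▸ differentiable_single 0 (by fun_prop)
      · exact hV2 ▸ fun p => (hasFDerivAt_projectiveField N m p).differentiableAt
    · exact hVab a b ▸ differentiable_single _ (by fun_prop)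
    · exact hVka k a ▸ differentiable_single _ (by fun_prop)
  · have mem : ∀ i, V i ∈ Submodule.span ℝ (Set.range V) :=
      fun i => Submodule.subset_span ⟨i, rfl⟩
    have d0 : ∀ p v, fderiv ℝ (V (Sum.inl 0)) p v = 0 := by intro p v; simp [hV0]
    have d1 : ∀ p v, fderiv ℝ (V (Sum.inl 1)) p v = Pi.single 0 (v 0) := by
      intro p v
      rw [hV1, fderiv_single_apply 0 (by fun_prop), fderiv_eval_apply]
    have d2 : ∀ p v, fderiv ℝ (V (Sum.inl 2)) p v =
        fun j => if j = 0 then 2 * p 0 * v 0 else N * (p 0 * v j + p j * v 0) := by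
      intro p v
      rw [hV2]
      exact fderiv_projectiveField_apply N m p v
    have dab : ∀ a b p v, fderiv ℝ (V (Sum.inr (Sum.inl (a, b)))) p v =
        Pi.single b.succ (v a.succ) := by
      intro a b p v
      rw [hVab, fderiv_single_apply _ (by fun_prop), fderiv_eval_apply]
    have dka : ∀ k a p v, fderiv ℝ (V (Sum.inr (Sum.inr (k, a)))) p v =
        Pi.single a.succ ((k : ℕ) * p 0 ^ ((k : ℕ) - 1) * v 0) := by
      intro k a p v
      rw [hVka, fderiv_single_apply _ (by fun_prop), fderiv_eval_pow_apply]
    have b01 : vbracket (V (Sum.inl 0)) (V (Sum.inl 1)) = V (Sum.inl 0) := by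
      funext p
      simp only [vbracket, d0, d1]
      simp [hV0]
    have b02 : vbracket (V (Sum.inl 0)) (V (Sum.inl 2)) =
        (2 : ℝ) • V (Sum.inl 1) + (N : ℝ) • ∑ a, V (Sum.inr (Sum.inl (a, a))) := by
      funext p j
      simp only [vbracket, d0, d2]
      refine Fin.cases ?_ (fun c => ?_) j
      · simp [hV0, hV1, hVab, Pi.single_apply, (Fin.succ_ne_zero _).symm]
      · simp [hV0, hV1, hVab, Pi.single_apply]
    have b0ab : ∀ a b, vbracket (V (Sum.inl 0)) (V (Sum.inr (Sum.inl (a, b)))) = 0 := by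
      intro a b
      funext p
      simp only [vbracket, d0, dab]
      simp [hV0]
    have b0ka : ∀ k a, vbracket (V (Sum.inl 0)) (V (Sum.inr (Sum.inr (k, a)))) =
        ((k : ℕ) : ℝ) • V (Sum.inr (Sum.inr (⟨(k : ℕ) - 1, by omega⟩, a))) := by
      intro k a
      funext p
      simp only [vbracket, d0, dka]
      simp [hV0, hVka, ← Pi.single_smul]
    have b12 : vbracket (V (Sum.inl 1)) (V (Sum.inl 2)) = V (Sum.inl 2) := by
      funext p j
      simp only [vbracket, d1, d2]
      refine Fin.cases ?_ (fun c => ?_) j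
      · simp [hV1, hV2]
        ring
      · simp [hV1, hV2]
        ring
    have b1ab : ∀ a b, vbracket (V (Sum.inl 1)) (V (Sum.inr (Sum.inl (a, b)))) = 0 := by
      intro a b
      funext p
      simp only [vbracket, d1, dab]
      simp [hV1, hVab]
    have b1ka : ∀ k a, vbracket (V (Sum.inl 1)) (V (Sum.inr (Sum.inr (k, a)))) =
        ((k : ℕ) : ℝ) • V (Sum.inr (Sum.inr (k, a))) := by
      intro k a
      funext p
      simp only [vbracket, d1, dka]
      rcases k with ⟨_ | k, hk⟩
      · simp [hV1, hVka]
      · simp [hV1, hVka, ← Pi.single_smul, pow_succ, mul_assoc]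
    have b2ab : ∀ a b, vbracket (V (Sum.inl 2)) (V (Sum.inr (Sum.inl (a, b)))) = 0 := by
      intro a b
      funext p j
      simp only [vbracket, d2, dab]
      refine Fin.cases ?_ (fun c => ?_) j
      · simp [hV2, hVab]
      · simp [hV2, hVab, Pi.single_apply]
        split_ifs <;> ring
    have b2ka : ∀ (k : Fin (N + 1)) a, vbracket (V (Sum.inl 2)) (V (Sum.inr (Sum.inr (k, a)))) ∈
        Submodule.span ℝ (Set.range V) := by
      intro k a
      have key : vbracket (V (Sum.inl 2)) (V (Sum.inr (Sum.inr (k, a)))) =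
          fun p => Pi.single a.succ ((((k : ℕ) : ℝ) - N) * p 0 ^ ((k : ℕ) + 1)) := by
        funext p j
        simp only [vbracket, d2, dka]
        refine Fin.cases ?_ (fun c => ?_) j
        · simp [hV2, hVka]
        · rcases k with ⟨_ | k, hk⟩
          · simp [hV2, hVka, Pi.single_apply]
            split_ifs <;> ring
          · simp [hV2, hVka, Pi.single_apply]
            split_ifs <;> ring
      rw [key]
      by_cases hk : (k : ℕ) = N
      · convert Submodule.zero_mem _ using 1
        funext p
        simp [hk]
      · convert Submodule.smul_mem _ (((k : ℕ) : ℝ) - N)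
          (mem (Sum.inr (Sum.inr (⟨(k : ℕ) + 1, by omega⟩, a)))) using 1
        funext p
        simp [hVka, ← Pi.single_smul]
    have babcd : ∀ a b c d, vbracket (V (Sum.inr (Sum.inl (a, b)))) (V (Sum.inr (Sum.inl (c, d)))) =
        (if c = b then (1 : ℝ) else 0) • V (Sum.inr (Sum.inl (a, d))) -
          (if a = d then (1 : ℝ) else 0) • V (Sum.inr (Sum.inl (c, b))) := by
      intro a b c d
      funext p
      simp only [vbracket, dab]
      by_cases h₁ : c = b <;> by_cases h₂ : a = d <;>
        simp [hVab, h₁, h₂]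
    have babkc : ∀ a b k c, vbracket (V (Sum.inr (Sum.inl (a, b)))) (V (Sum.inr (Sum.inr (k, c)))) =
        -(if a = c then (1 : ℝ) else 0) • V (Sum.inr (Sum.inr (k, b))) := by
      intro a b k c
      funext p
      simp only [vbracket, dab, dka]
      by_cases h : a = c <;> simp [hVab, hVka, h]
    have bkalb : ∀ k a l b,
        vbracket (V (Sum.inr (Sum.inr (k, a)))) (V (Sum.inr (Sum.inr (l, b)))) = 0 := by
      intro k a l b
      funext p
      simp only [vbracket, dka]
      simp [hVka]
    have bself : ∀ i, vbracket (V i) (V i) ∈ Submodule.span ℝ (Set.range V) := by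
      intro i
      convert Submodule.zero_mem _ using 1
      exact VectorField.lieBracket_self
    have m01 := b01 ▸ mem (Sum.inl 0)
    have m02 : vbracket (V (Sum.inl 0)) (V (Sum.inl 2)) ∈ Submodule.span ℝ (Set.range V) :=
      b02 ▸ Submodule.add_mem _ (Submodule.smul_mem _ _ (mem _))
        (Submodule.smul_mem _ _ (Submodule.sum_mem _ fun a _ => mem _))
    have m12 := b12 ▸ mem (Sum.inl 2)
    have miab : ∀ i a b, vbracket (V (Sum.inl i)) (V (Sum.inr (Sum.inl (a, b)))) ∈
        Submodule.span ℝ (Set.range V) := by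
      intro i a b
      fin_cases i
      · exact b0ab a b ▸ Submodule.zero_mem _
      · exact b1ab a b ▸ Submodule.zero_mem _
      · exact b2ab a b ▸ Submodule.zero_mem _
    have mika : ∀ i k a, vbracket (V (Sum.inl i)) (V (Sum.inr (Sum.inr (k, a)))) ∈
        Submodule.span ℝ (Set.range V) := by
      intro i k a
      fin_cases i
      · exact b0ka k a ▸ Submodule.smul_mem _ _ (mem _)
      · exact b1ka k a ▸ Submodule.smul_mem _ _ (mem _)
      · exact b2ka k a
    have mabkc : ∀ a b k c, vbracket (V (Sum.inr (Sum.inl (a, b))))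
        (V (Sum.inr (Sum.inr (k, c)))) ∈ Submodule.span ℝ (Set.range V) :=
      fun a b k c => babkc a b k c ▸ Submodule.smul_mem _ _ (mem _)
    rintro (i | ⟨a, b⟩ | ⟨k, a⟩) (j | ⟨c, d⟩ | ⟨l, c⟩)
    · fin_cases i <;> fin_cases j
      · exact bself _
      · exact m01
      · exact m02
      · exact vbracket_mem_of_swap m01
      · exact bself _
      · exact m12
      · exact vbracket_mem_of_swap m02
      · exact vbracket_mem_of_swap m12
      · exact bself _
    · exact miab i c d
    · exact mika i l c
    · exact vbracket_mem_of_swap (miab j a b)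
    · exact babcd a b c d ▸ Submodule.sub_mem _ (Submodule.smul_mem _ _ (mem _))
        (Submodule.smul_mem _ _ (mem _))
    · exact mabkc a b l c
    · exact vbracket_mem_of_swap (mika j k a)
    · exact vbracket_mem_of_swap (mabkc c d k a)
    · exact bkalb k a l c ▸ Submodule.zero_mem _
  · rw [finrank_span_eq_card hli]
    simp
    ring
end

section
/- On ℝ³ with coordinates (t,u,p), consider the 10 smooth vector fields: ∂_t; ∂_u; t∂_t − p∂_p; t∂_u + ∂_p; t²∂_u + 2t∂_p; u∂_u + p∂_p; 2p∂_t + p²∂_u; t²∂_t + 2tu∂_u + 2u∂_p; (2tp − 2u)∂_t + tp²∂_u + p²∂_p; and (2t²p − 4tu)∂_t + (t²p² − 4u²)∂_u + (2tp² − 4up)∂_p. These vector fields are linearly independent over ℝ and their real span is closed under the Lie bracket of vector fields; hence they span a 10-dimensional Lie subalgebra of the Lie algebra of smooth vector fields on ℝ³. -/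
/-- The real linear combination with coefficients `a` of the 10 contact symmetries. -/
def contactField (a : Fin 10 → ℝ) (x : Fin 3 → ℝ) : Fin 3 → ℝ :=
  ![a 0 + a 2 * x 0 + a 6 * (2 * x 2) + a 7 * x 0 ^ 2 + a 8 * (2 * x 0 * x 2 - 2 * x 1)
      + a 9 * (2 * x 0 ^ 2 * x 2 - 4 * x 0 * x 1),
    a 1 + a 3 * x 0 + a 4 * x 0 ^ 2 + a 5 * x 1 + a 6 * x 2 ^ 2 + a 7 * (2 * x 0 * x 1)
      + a 8 * (x 0 * x 2 ^ 2) + a 9 * (x 0 ^ 2 * x 2 ^ 2 - 4 * x 1 ^ 2),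
    -(a 2 * x 2) + a 3 + a 4 * (2 * x 0) + a 5 * x 2 + a 7 * (2 * x 1) + a 8 * x 2 ^ 2
      + a 9 * (2 * x 0 * x 2 ^ 2 - 4 * x 1 * x 2)]

/-- The bracket of the 10-dimensional Lie algebra of contact symmetries, in coordinates. -/
def contactBracket (a b : Fin 10 → ℝ) : Fin 10 → ℝ :=
  ![(a 0 * b 2 - a 2 * b 0) - 2 * (a 1 * b 8 - a 8 * b 1) + 2 * (a 3 * b 6 - a 6 * b 3),
    (a 0 * b 3 - a 3 * b 0) + (a 1 * b 5 - a 5 * b 1),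
    2 * (a 0 * b 7 - a 7 * b 0) - 4 * (a 1 * b 9 - a 9 * b 1) + 4 * (a 4 * b 6 - a 6 * b 4),
    2 * (a 0 * b 4 - a 4 * b 0) + 2 * (a 1 * b 7 - a 7 * b 1) + (a 2 * b 3 - a 3 * b 2)
      + (a 3 * b 5 - a 5 * b 3),
    2 * (a 2 * b 4 - a 4 * b 2) + (a 3 * b 7 - a 7 * b 3) + (a 4 * b 5 - a 5 * b 4),
    2 * (a 0 * b 7 - a 7 * b 0) - 8 * (a 1 * b 9 - a 9 * b 1) + 2 * (a 3 * b 8 - a 8 * b 3),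
    (a 0 * b 8 - a 8 * b 0) - 2 * (a 2 * b 6 - a 6 * b 2) + (a 5 * b 6 - a 6 * b 5),
    (a 2 * b 7 - a 7 * b 2) - 2 * (a 3 * b 9 - a 9 * b 3) + 2 * (a 4 * b 8 - a 8 * b 4),
    2 * (a 0 * b 9 - a 9 * b 0) - (a 2 * b 8 - a 8 * b 2) + (a 5 * b 8 - a 8 * b 5)
      + 2 * (a 6 * b 7 - a 7 * b 6),
    (a 5 * b 9 - a 9 * b 5) - (a 7 * b 8 - a 8 * b 7)]

theorem differentiable_contactField (a : Fin 10 → ℝ) : Differentiable ℝ (contactField a) := by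
  rw [differentiable_pi]
  intro i
  fin_cases i <;> simp only [contactField] <;> simp <;> fun_prop

/-- The Jacobian of `contactField a` applied to a vector. -/
theorem fderiv_contactField (a : Fin 10 → ℝ) (x v : Fin 3 → ℝ) :
    fderiv ℝ (contactField a) x v =
      ![a 2 * v 0 + a 6 * (2 * v 2) + a 7 * (2 * x 0 * v 0)
          + a 8 * (2 * (x 0 * v 2 + x 2 * v 0) - 2 * v 1)
          + a 9 * (2 * (x 0 ^ 2 * v 2 + 2 * x 0 * x 2 * v 0) - 4 * (x 0 * v 1 + x 1 * v 0)),
        a 3 * v 0 + a 4 * (2 * x 0 * v 0) + a 5 * v 1 + a 6 * (2 * x 2 * v 2)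
          + a 7 * (2 * (x 0 * v 1 + x 1 * v 0)) + a 8 * (x 2 ^ 2 * v 0 + 2 * x 0 * x 2 * v 2)
          + a 9 * (2 * x 0 * x 2 ^ 2 * v 0 + 2 * x 0 ^ 2 * x 2 * v 2 - 8 * x 1 * v 1),
        -(a 2 * v 2) + a 4 * (2 * v 0) + a 5 * v 2 + a 7 * (2 * v 1) + a 8 * (2 * x 2 * v 2)
          + a 9 * (2 * (x 2 ^ 2 * v 0 + 2 * x 0 * x 2 * v 2) - 4 * (x 1 * v 2 + x 2 * v 1))] := by
  rw [← (differentiable_contactField a x).lineDeriv_eq_fderiv]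
  refine HasDerivAt.deriv (hasDerivAt_pi.2 fun i => ?_)
  have h (j : Fin 3) : HasDerivAt (fun s : ℝ => x j + s * v j) (v j) 0 := by
    simpa using ((hasDerivAt_id (0 : ℝ)).mul_const (v j)).const_add (x j)
  fin_cases i
  all_goals
    simp only [contactField, Pi.add_apply, Pi.smul_apply, smul_eq_mul]
    simp
  · refine HasDerivAt.congr_deriv (((((((h 0).const_mul (a 2)).const_add (a 0)).add
      (((h 2).const_mul 2).const_mul (a 6))).add
      (((h 0).pow 2).const_mul (a 7))).add
      (((((h 0).const_mul 2).mul (h 2)).sub ((h 1).const_mul 2)).const_mul (a 8))).add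
      ((((((h 0).pow 2).const_mul 2).mul (h 2)).sub
        (((h 0).const_mul 4).mul (h 1))).const_mul (a 9))) ?_
    simp only [Pi.pow_apply, Nat.cast_ofNat]
    ring
  · refine HasDerivAt.congr_deriv ((((((((((h 0).const_mul (a 3)).const_add (a 1)).add
      (((h 0).pow 2).const_mul (a 4))).add
      ((h 1).const_mul (a 5))).add (((h 2).pow 2).const_mul (a 6))).add
      ((((h 0).const_mul 2).mul (h 1)).const_mul (a 7))).add
      (((h 0).mul ((h 2).pow 2)).const_mul (a 8)))).add
      (((((h 0).pow 2).mul ((h 2).pow 2)).sub (((h 1).pow 2).const_mul 4)).const_mul (a 9))) ?_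
    simp only [Pi.pow_apply, Nat.cast_ofNat]
    ring
  · refine HasDerivAt.congr_deriv ((((((((h 2).const_mul (a 2)).neg.add_const (a 3)).add
      (((h 0).const_mul 2).const_mul (a 4))).add ((h 2).const_mul (a 5))).add
      (((h 1).const_mul 2).const_mul (a 7))).add (((h 2).pow 2).const_mul (a 8))).add
      (((((h 0).const_mul 2).mul ((h 2).pow 2)).sub
        (((h 1).const_mul 4).mul (h 2))).const_mul (a 9))) ?_
    simp only [Pi.pow_apply, Nat.cast_ofNat]
    ring

theorem vbracket_contactField (a b : Fin 10 → ℝ) :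
    vbracket (contactField a) (contactField b) = contactField (contactBracket a b) := by
  ext x i
  simp only [vbracket, fderiv_contactField]
  fin_cases i <;> simp [contactField, contactBracket] <;> ring

theorem eq_zero_of_contactField_eq_zero {a : Fin 10 → ℝ} (h : contactField a = 0) : a = 0 := by
  have e (t u p : ℝ) (i : Fin 3) : contactField a ![t, u, p] i = 0 := by simp [h]
  have h0 := e 0 0 0
  have h1 := e 1 0 0
  have h2 := e 0 1 0
  have h3 := e 0 0 1
  have h4 := e 1 0 1
  simp [contactField, Fin.forall_fin_succ] at h0 h1 h2 h3 h4
  ext i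
  fin_cases i <;> simp <;> linarith

/-- The 10 vector fields on `ℝ³` with coordinates `(t, u, p) = (x 0, x 1, x 2)`:
`∂_t; ∂_u; t∂_t − p∂_p; t∂_u + ∂_p; t²∂_u + 2t∂_p; u∂_u + p∂_p; 2p∂_t + p²∂_u;
t²∂_t + 2tu∂_u + 2u∂_p; (2tp − 2u)∂_t + tp²∂_u + p²∂_p;
(2t²p − 4tu)∂_t + (t²p² − 4u²)∂_u + (2tp² − 4up)∂_p`
are linearly independent and span a 10-dimensional Lie algebra of vector fields. -/
theorem stmt11
    (V : Fin 10 → ((Fin 3 → ℝ) → (Fin 3 → ℝ)))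
    (hV : V = ![fun _ => ![1, 0, 0],
                fun _ => ![0, 1, 0],
                fun x => ![x 0, 0, -x 2],
                fun x => ![0, x 0, 1],
                fun x => ![0, (x 0) ^ 2, 2 * x 0],
                fun x => ![0, x 1, x 2],
                fun x => ![2 * x 2, (x 2) ^ 2, 0],
                fun x => ![(x 0) ^ 2, 2 * x 0 * x 1, 2 * x 1],
                fun x => ![2 * x 0 * x 2 - 2 * x 1, x 0 * (x 2) ^ 2, (x 2) ^ 2],
                fun x => ![2 * (x 0) ^ 2 * x 2 - 4 * x 0 * x 1,
                           (x 0) ^ 2 * (x 2) ^ 2 - 4 * (x 1) ^ 2,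
                           2 * x 0 * (x 2) ^ 2 - 4 * x 1 * x 2]]) :
    LinearIndependent ℝ V ∧
    (∀ X ∈ Submodule.span ℝ (Set.range V), ∀ Y ∈ Submodule.span ℝ (Set.range V),
      vbracket X Y ∈ Submodule.span ℝ (Set.range V)) ∧
    Module.finrank ℝ (Submodule.span ℝ (Set.range V)) = 10 := by
  have hsum (a : Fin 10 → ℝ) : ∑ i, a i • V i = contactField a := by
    subst hV
    ext x i
    fin_cases i <;> simp [Fin.sum_univ_succ, contactField] <;> ring
  have hmem (X : (Fin 3 → ℝ) → (Fin 3 → ℝ)) :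
      X ∈ Submodule.span ℝ (Set.range V) ↔ ∃ a, contactField a = X := by
    simp [Submodule.mem_span_range_iff_exists_fun, hsum]
  have hli : LinearIndependent ℝ V := by
    rw [Fintype.linearIndependent_iff]
    intro a ha
    exact congrFun (eq_zero_of_contactField_eq_zero ((hsum a).symm.trans ha))
  refine ⟨hli, fun X hX Y hY => ?_, by simpa using finrank_span_eq_card hli⟩
  obtain ⟨a, rfl⟩ := (hmem X).1 hX
  obtain ⟨b, rfl⟩ := (hmem Y).1 hY
  exact (hmem _).2 ⟨contactBracket a b, (vbracket_contactField a b).symm⟩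
end

section
/- Let n ≥ 3 be an integer. On ℝ² with coordinates (t,u), consider the n + 1 smooth vector fields ∂_t, ∂_u, t∂_u, t²∂_u, …, t^{n−2}∂_u, and t∂_t + (n−3)u∂_u. These vector fields are linearly independent over ℝ and their real span is closed under the Lie bracket of vector fields; hence they span an (n+1)-dimensional Lie subalgebra of the Lie algebra of smooth vector fields on ℝ². -/
open Polynomial in
/-- The vector field `(a + b t) ∂_t + (b c u + q(t)) ∂_u` on the plane, depending linearly on
`a`, `b` and the polynomial `q` of degree less than `m`. -/
noncomputable def affineField (c : ℝ) (m : ℕ) :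
    ℝ × ℝ × degreeLT ℝ m →ₗ[ℝ] ((Fin 2 → ℝ) → (Fin 2 → ℝ)) where
  toFun x := fun p => ![x.1 + x.2.1 * p 0, x.2.1 * (c * p 1) + (x.2.2 : ℝ[X]).eval (p 0)]
  map_add' x y := by
    funext p i
    fin_cases i <;> simp <;> ring
  map_smul' r x := by
    funext p i
    fin_cases i <;> simp <;> ring

open Polynomial in
theorem affineField_apply (c : ℝ) (m : ℕ) (a b : ℝ) (q : degreeLT ℝ m) :
    affineField c m (a, b, q) =
      fun p => ![a + b * p 0, b * (c * p 1) + (q : ℝ[X]).eval (p 0)] := rfl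

open Polynomial in
theorem affineField_injective (c : ℝ) (m : ℕ) : Function.Injective (affineField c m) := by
  rw [injective_iff_map_eq_zero]
  rintro ⟨a, b, q⟩ h
  rw [affineField_apply] at h
  have ha : a = 0 := by simpa using congrFun (congrFun h 0) 0
  have hb : b = 0 := by simpa [ha] using congrFun (congrFun h ![1, 0]) 0
  have hq : (q : ℝ[X]) = 0 := by
    refine Polynomial.funext fun t => ?_
    simpa [hb] using congrFun (congrFun h ![t, 0]) 1
  have hq' : q = 0 := Subtype.ext hq
  simp [ha, hb, hq']

open Polynomial in
theorem finrank_range_affineField (c : ℝ) (m : ℕ) :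
    Module.finrank ℝ (LinearMap.range (affineField c m)) = m + 2 := by
  rw [LinearMap.finrank_range_of_inj (affineField_injective c m)]
  have : Module.Finite ℝ (degreeLT ℝ m) := Module.Finite.equiv (degreeLTEquiv ℝ m).symm
  rw [Module.finrank_prod, Module.finrank_prod, (degreeLTEquiv ℝ m).finrank_eq]
  simp
  ring

open Polynomial in
theorem fderiv_affineField (c : ℝ) (m : ℕ) (a b : ℝ) (q : degreeLT ℝ m) (p v : Fin 2 → ℝ) :
    fderiv ℝ (affineField c m (a, b, q)) p v =
      ![b * v 0, b * (c * v 1) + (derivative (q : ℝ[X])).eval (p 0) * v 0] := by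
  have h0 : HasFDerivAt (fun p : Fin 2 → ℝ => p 0)
      (ContinuousLinearMap.proj (R := ℝ) (φ := fun _ : Fin 2 => ℝ) 0) p := hasFDerivAt_apply 0 p
  have h1 : HasFDerivAt (fun p : Fin 2 → ℝ => p 1)
      (ContinuousLinearMap.proj (R := ℝ) (φ := fun _ : Fin 2 => ℝ) 1) p := hasFDerivAt_apply 1 p
  have hq := ((q : ℝ[X]).hasDerivAt (p 0)).comp_hasFDerivAt p h0
  have hu := ((h1.const_mul c).const_mul b).add hq
  have ht := (h0.const_mul b).const_add a
  have h : HasFDerivAt (affineField c m (a, b, q)) (ContinuousLinearMap.pi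
      (![b • .proj 0, b • c • .proj 1 + (derivative (q : ℝ[X])).eval (p 0) • .proj 0] :
        Fin 2 → (Fin 2 → ℝ) →L[ℝ] ℝ)) p := by
    refine hasFDerivAt_pi.2 fun i => ?_
    fin_cases i
    · exact ht
    · exact hu
  rw [h.fderiv]
  funext i
  fin_cases i <;> simp

open Polynomial in
theorem C_add_C_mul_X_mul_derivative_mem_degreeLT {R : Type*} [CommRing R] {m : ℕ} (a b : R)
    {q : R[X]} (hq : q ∈ degreeLT R m) : (C a + C b * X) * derivative q ∈ degreeLT R m := by
  rw [mem_degreeLT, degree_lt_iff_coeff_zero] at hq ⊢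
  intro k hk
  have hd : (derivative q).coeff k = 0 := by simp [coeff_derivative, hq (k + 1) (by omega)]
  rcases k with _ | k
  · simp [add_mul, mul_assoc, hd]
  · simp [add_mul, mul_assoc, hd, coeff_X_mul, coeff_derivative, hq (k + 1) hk]

open Polynomial in
theorem vbracket_affineField_mem_range (c : ℝ) (m : ℕ) (x y : ℝ × ℝ × degreeLT ℝ m) :
    vbracket (affineField c m x) (affineField c m y) ∈ LinearMap.range (affineField c m) := by
  obtain ⟨a, b, q⟩ := x
  obtain ⟨a', b', q'⟩ := y
  refine ⟨(a * b' - a' * b, 0, (c * b') • q - (c * b) • q' +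
    (⟨_, C_add_C_mul_X_mul_derivative_mem_degreeLT a b q'.2⟩ -
      ⟨_, C_add_C_mul_X_mul_derivative_mem_degreeLT a' b' q.2⟩)), ?_⟩
  funext p i
  simp only [vbracket, fderiv_affineField]
  simp only [affineField_apply]
  fin_cases i <;> simp <;> ring

open Polynomial in
theorem range_affineField (c : ℝ) (m : ℕ) :
    LinearMap.range (affineField c m) = Submodule.span ℝ
      ({fun _ => ![1, 0], fun p => ![p 0, c * p 1]} ∪
        Set.range fun (i : Fin m) (p : Fin 2 → ℝ) => ![0, p 0 ^ (i : ℕ)]) := by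
  apply le_antisymm
  · rintro _ ⟨⟨a, b, q⟩, rfl⟩
    have key : affineField c m (a, b, q) =
        a • (fun _ => ![1, 0]) + b • (fun p => ![p 0, c * p 1]) +
          ∑ i : Fin m, (q : ℝ[X]).coeff i • fun p : Fin 2 → ℝ => ![0, p 0 ^ (i : ℕ)] := by
      funext p i
      have hq : (q : ℝ[X]).eval (p 0) = ∑ i : Fin m, (q : ℝ[X]).coeff i * p 0 ^ (i : ℕ) := by
        rw [eval_eq_sum_degreeLTEquiv q.2]
        rfl
      fin_cases i <;> simp [affineField_apply, Finset.sum_apply, hq]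
    rw [key]
    refine add_mem (add_mem ?_ ?_) (sum_mem fun i _ => ?_) <;>
      exact Submodule.smul_mem _ _ (Submodule.subset_span (by simp))
  · rw [Submodule.span_le]
    rintro _ ((rfl | rfl) | ⟨i, rfl⟩)
    · exact ⟨(1, 0, 0), by simp [affineField_apply]⟩
    · exact ⟨(0, 1, 0), by simp [affineField_apply]⟩
    · have hi : (X ^ (i : ℕ) : ℝ[X]) ∈ degreeLT ℝ m := by
        rw [mem_degreeLT, degree_X_pow]
        exact_mod_cast i.2
      exact ⟨(0, 0, ⟨_, hi⟩), by simp [affineField_apply]⟩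

/-- The `n+1` vector fields `∂_t, ∂_u, t∂_u, …, t^{n−2}∂_u, t∂_t + (n−3)u∂_u` on `ℝ²`
are linearly independent and span an `(n+1)`-dimensional Lie algebra of vector fields. -/
theorem stmt12 (n : ℕ) (hn : 3 ≤ n)
    (V : Fin (n + 1) → ((Fin 2 → ℝ) → (Fin 2 → ℝ)))
    (hV : ∀ i : Fin (n + 1), V i = fun p =>
      if (i : ℕ) = 0 then ![1, 0]
      else if (i : ℕ) = n then ![p 0, ((n : ℝ) - 3) * p 1]
      else ![0, (p 0) ^ ((i : ℕ) - 1)]) :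
    LinearIndependent ℝ V ∧
    (∀ X ∈ Submodule.span ℝ (Set.range V), ∀ Y ∈ Submodule.span ℝ (Set.range V),
      vbracket X Y ∈ Submodule.span ℝ (Set.range V)) ∧
    Module.finrank ℝ (Submodule.span ℝ (Set.range V)) = n + 1 := by
  have hspan : Submodule.span ℝ (Set.range V) =
      LinearMap.range (affineField ((n : ℝ) - 3) (n - 1)) := by
    rw [range_affineField]
    congr 1
    ext W
    constructor
    · rintro ⟨i, rfl⟩
      rw [hV]
      by_cases h0 : (i : ℕ) = 0
      · simp [h0]
      by_cases h1 : (i : ℕ) = n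
      · left; right
        simp [h1, show n ≠ 0 by omega]
      · right
        exact ⟨⟨(i : ℕ) - 1, by omega⟩, by simp [h0, h1]⟩
    · rintro ((rfl | rfl) | ⟨i, rfl⟩)
      · exact ⟨0, by simp [hV]⟩
      · exact ⟨Fin.last n, by simp [hV, show n ≠ 0 by omega]⟩
      · refine ⟨⟨(i : ℕ) + 1, by omega⟩, ?_⟩
        have : (i : ℕ) + 1 ≠ n := by omega
        simp [hV, this]
  have hrank : Module.finrank ℝ (Submodule.span ℝ (Set.range V)) = n + 1 := by
    rw [hspan, finrank_range_affineField]
    omega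
  refine ⟨?_, ?_, hrank⟩
  · rw [linearIndependent_iff_card_eq_finrank_span, Set.finrank, hrank, Fintype.card_fin]
  · rw [hspan]
    rintro _ ⟨x, rfl⟩ _ ⟨y, rfl⟩
    exact vbracket_affineField_mem_range _ _ x y
end

section
/- Let n ≥ 2 and let r be an integer with 2 ≤ r ≤ n+1. On ℝ^{n+2} with coordinates (t, u₀, u₁, …, u_n), define the smooth vector fields D := ∂_t + Σ_{i=0}^{n−1} u_{i+1} ∂_{u_i} + u_{n+1−r} ∂_{u_n} and V := ∂_{u_n}. Then: (i) [∂_t, D] = 0 and [∂_t, V] = 0; (ii) the Euler field ε := Σ_{i=0}^{n} u_i ∂_{u_i} satisfies [ε, D] = 0 and [ε, V] = −V; (iii) for every C^∞ function s : ℝ → ℝ, the vector field ξ_s := Σ_{i=0}^{n} s^{(i)}(t) ∂_{u_i} satisfies [ξ_s, V] = 0 and [ξ_s, D] = (s^{(n+1−r)}(t) − s^{(n+1)}(t)) · V; in particular [ξ_s, D] = 0 if and only if s^{(n+1)} = s^{(n+1−r)} identically on ℝ. -/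
/-- The derivative of a map into a finite product may be computed coordinatewise. -/
theorem fderiv_apply_of_hasFDerivAt_coord {ι E : Type*} [Fintype ι] [NormedAddCommGroup E]
    [NormedSpace ℝ E] {F : E → ι → ℝ} {F' : ι → E →L[ℝ] ℝ} {p : E}
    (h : ∀ j, HasFDerivAt (fun x => F x j) (F' j) p) (v : E) (j : ι) :
    fderiv ℝ F p v j = F' j v := by
  rw [(hasFDerivAt_pi.2 h).fderiv]
  rfl

/-- The derivative of a vector field whose `0`-th component is constant and whose other components
are coordinate functions. -/
theorem fderiv_coord_apply {m : ℕ} {F : (Fin m → ℝ) → (Fin m → ℝ)} {c : ℝ} {σ : Fin m → Fin m}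
    (hF : ∀ x j, F x j = if (j : ℕ) = 0 then c else x (σ j)) (p v : Fin m → ℝ) (j : Fin m) :
    fderiv ℝ F p v j = if (j : ℕ) = 0 then 0 else v (σ j) := by
  rw [fderiv_apply_of_hasFDerivAt_coord (F' := fun j : Fin m =>
    if (j : ℕ) = 0 then 0 else ContinuousLinearMap.proj (σ j))]
  · split_ifs <;> rfl
  · intro j
    simp only [hF]
    split_ifs
    · exact hasFDerivAt_const _ _
    · exact hasFDerivAt_apply _ _

/-- The derivative of the Euler field `Σ u_i ∂_{u_i}`. -/
theorem fderiv_euler_apply {m : ℕ} (p v : Fin m → ℝ) (j : Fin m) :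
    fderiv ℝ (fun (x : Fin m → ℝ) (j : Fin m) => if (j : ℕ) = 0 then (0 : ℝ) else x j) p v j =
      if (j : ℕ) = 0 then 0 else v j :=
  fderiv_coord_apply (c := 0) (σ := id) (fun _ _ => rfl) p v j

/-- The derivative of the field `ξ_s = Σ s^{(i)}(t) ∂_{u_i}`. -/
theorem fderiv_prolongation_apply {m : ℕ} {s : ℝ → ℝ} (hs : ContDiff ℝ (⊤ : ℕ∞) s)
    (p v : Fin (m + 1) → ℝ) (j : Fin (m + 1)) :
    fderiv ℝ (fun (x : Fin (m + 1) → ℝ) (j : Fin (m + 1)) =>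
      if (j : ℕ) = 0 then (0 : ℝ) else iteratedDeriv ((j : ℕ) - 1) s (x 0)) p v j =
      if (j : ℕ) = 0 then 0 else iteratedDeriv (j : ℕ) s (p 0) * v 0 := by
  rw [fderiv_apply_of_hasFDerivAt_coord (F' := fun j : Fin (m + 1) =>
    if (j : ℕ) = 0 then 0 else iteratedDeriv (j : ℕ) s (p 0) • ContinuousLinearMap.proj 0)]
  · split_ifs <;> rfl
  · intro j
    split_ifs with hj
    · exact hasFDerivAt_const _ _
    · obtain ⟨k, hk⟩ := Nat.exists_eq_succ_of_ne_zero hj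
      simp only [hk, Nat.succ_eq_add_one, Nat.add_sub_cancel, iteratedDeriv_succ]
      have hd : Differentiable ℝ (iteratedDeriv k s) :=
        hs.differentiable_iteratedDeriv k (by exact_mod_cast WithTop.coe_lt_top k)
      exact (hd (p 0)).hasDerivAt.comp_hasFDerivAt p
        (hasFDerivAt_apply (𝕜 := ℝ) (0 : Fin (m + 1)) p)

/-- On `ℝ^{n+2}` with coordinates `(t, u₀, …, u_n)`, for the total derivative field `D` of
the ODE `u^{(n+1)} = u^{(n+1−r)}` and `V = ∂_{u_n}`:
(i) `∂_t` commutes with `D` and `V`; (ii) the Euler field `ε = Σ u_i ∂_{u_i}` satisfies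
`[ε,D] = 0`, `[ε,V] = −V`; (iii) for smooth `s : ℝ → ℝ`, `ξ_s = Σ s^{(i)}(t) ∂_{u_i}`
satisfies `[ξ_s,V] = 0` and `[ξ_s,D] = (s^{(n+1−r)} − s^{(n+1)})·V`, so `[ξ_s,D] = 0` iff
`s^{(n+1)} = s^{(n+1−r)}`. -/
theorem stmt13 (n r : ℕ) (hn : 2 ≤ n) (hr1 : 2 ≤ r) (hr2 : r ≤ n + 1)
    (D V : (Fin (n + 2) → ℝ) → (Fin (n + 2) → ℝ))
    (hD : ∀ x j, D x j = if (j : ℕ) = 0 then 1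
      else if h : (j : ℕ) ≤ n then x ⟨(j : ℕ) + 1, by omega⟩
      else x ⟨n + 2 - r, by omega⟩)
    (hV : V = fun _ => Pi.single (Fin.last (n + 1)) 1) :
    (vbracket (fun _ => Pi.single (0 : Fin (n + 2)) 1) D = 0 ∧
     vbracket (fun _ => Pi.single (0 : Fin (n + 2)) 1) V = 0) ∧
    (vbracket (fun x (j : Fin (n + 2)) => if (j : ℕ) = 0 then (0 : ℝ) else x j) D = 0 ∧
     vbracket (fun x (j : Fin (n + 2)) => if (j : ℕ) = 0 then (0 : ℝ) else x j) V = -V) ∧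
    (∀ s : ℝ → ℝ, ContDiff ℝ (⊤ : ℕ∞) s →
      ∀ ξ : (Fin (n + 2) → ℝ) → (Fin (n + 2) → ℝ),
        (ξ = fun (x : Fin (n + 2) → ℝ) (j : Fin (n + 2)) =>
          if (j : ℕ) = 0 then (0 : ℝ) else iteratedDeriv ((j : ℕ) - 1) s (x 0)) →
        vbracket ξ V = 0 ∧
        (∀ x, vbracket ξ D x =
          (iteratedDeriv (n + 1 - r) s (x 0) - iteratedDeriv (n + 1) s (x 0)) • V x) ∧
        (vbracket ξ D = 0 ↔
          ∀ t : ℝ, iteratedDeriv (n + 1) s t = iteratedDeriv (n + 1 - r) s t)) := by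
  subst hV
  have fderiv_D : ∀ p v j, fderiv ℝ D p v j = if (j : ℕ) = 0 then 0
      else if h : (j : ℕ) ≤ n then v ⟨(j : ℕ) + 1, by omega⟩
      else v ⟨n + 2 - r, by omega⟩ := by
    intro p v j
    rw [fderiv_coord_apply (c := 1) (σ := fun j : Fin (n + 2) =>
      if h : (j : ℕ) ≤ n then ⟨(j : ℕ) + 1, by omega⟩ else ⟨n + 2 - r, by omega⟩)]
    · split_ifs <;> rfl
    · intro x j
      rw [hD]
      split_ifs <;> rfl
  refine ⟨⟨?_, ?_⟩, ⟨?_, ?_⟩, ?_⟩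
  · ext x j
    simp only [vbracket, Pi.sub_apply, fderiv_D, fderiv_fun_const]
    split_ifs
    · simp
    · rw [Pi.single_eq_of_ne (Fin.ne_of_val_ne (by simp))]
      simp
    · rw [Pi.single_eq_of_ne (Fin.ne_of_val_ne (by simp; omega))]
      simp
  · ext x j
    simp [vbracket]
  · ext x j
    simp only [vbracket, Pi.sub_apply, fderiv_D, fderiv_euler_apply, hD]
    have : n + 2 - r ≠ 0 := by omega
    split_ifs <;> simp_all
  · ext x j
    simp only [vbracket, Pi.sub_apply, fderiv_euler_apply, fderiv_fun_const]
    by_cases hj : (j : ℕ) = 0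
    · have hne : j ≠ Fin.last (n + 1) := Fin.ne_of_val_ne (by simp [hj])
      simp [hj, hne]
    · simp [hj]
  · rintro s hs ξ rfl
    have bracket_D : ∀ x, vbracket (fun (x : Fin (n + 2) → ℝ) (j : Fin (n + 2)) =>
          if (j : ℕ) = 0 then (0 : ℝ) else iteratedDeriv ((j : ℕ) - 1) s (x 0)) D x =
        (iteratedDeriv (n + 1 - r) s (x 0) - iteratedDeriv (n + 1) s (x 0)) •
          (Pi.single (Fin.last (n + 1)) 1 : Fin (n + 2) → ℝ) := by
      intro x
      ext j
      have hr0 : n + 2 - r ≠ 0 := by omega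
      have hr' : n + 2 - r - 1 = n + 1 - r := by omega
      simp only [vbracket, Pi.sub_apply, fderiv_D,
        fderiv_prolongation_apply hs, hD, Pi.smul_apply, Pi.single_apply, Fin.ext_iff, Fin.val_last]
      split_ifs with h0 h1 h2 h3
      all_goals first | omega | simp_all
    refine ⟨?_, bracket_D, fun h t => ?_, fun h => ?_⟩
    · ext x j
      have hne : (0 : Fin (n + 2)) ≠ Fin.last (n + 1) := Fin.ne_of_val_ne (by simp)
      simp only [vbracket, Pi.sub_apply, fderiv_prolongation_apply hs, Pi.single_eq_of_ne hne]
      simp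
    · have := congrFun ((bracket_D fun _ => t).symm.trans (congrFun h _)) (Fin.last (n + 1))
      simp at this
      linarith
    · ext x j
      rw [bracket_D, h]
      simp
end

section
/- Let 𝔣 be the 9-dimensional real vector space with basis e₀, e₁, …, e₆, x, T. Define a bilinear antisymmetric bracket β₀ on 𝔣 by: β₀(T, x) = −x; β₀(T, e_i) = (i − 4)·e_i for 0 ≤ i ≤ 6; β₀(x, e_i) = e_{i−1} for 1 ≤ i ≤ 6; β₀(x, e₀) = 0; and β₀(e_i, e_j) = 0 for all i, j. (Then β₀ is a Lie bracket on 𝔣.) Suppose β is any Lie algebra bracket on 𝔣 (bilinear, antisymmetric, satisfying the Jacobi identity) such that: β(T, v) = β₀(T, v) and β(x, v) = β₀(x, v) for all v ∈ 𝔣, and for all 0 ≤ i < j ≤ 6, β(e_i, e_j) lies in the subspace of 𝔣 spanned by e_{i+j−4} (when 0 ≤ i+j−4 ≤ 6), by x (when i+j = 7), and by T (when i+j = 8), and β(e_i, e_j) = 0 when i+j < 4. Then β(e_i, e_j) = 0 for all i, j; that is, β = β₀. -/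
/-- Rigidity of the candidate 9-dimensional algebraic model for 7th order ODEs with
harmonic curvature in `𝔸₃`: with basis `E 0, …, E 6` (= e₀,…,e₆), `E 7` (= x),
`E 8` (= T) of `𝔣 = ℝ⁹`, any Lie bracket `β` agreeing with the model bracket `β₀` on
`T` and `x`, and whose values `β(e_i, e_j)` lie in the prescribed (strongly regular,
T-invariant) spans, must satisfy `β(e_i, e_j) = 0` for all `i, j`; i.e. `β = β₀`. -/
theorem stmt15
    (E : ℕ → (Fin 9 → ℝ))
    (hE : ∀ (l : ℕ) (h : l < 9), E l = Pi.single (⟨l, h⟩ : Fin 9) 1)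
    (β : (Fin 9 → ℝ) →ₗ[ℝ] (Fin 9 → ℝ) →ₗ[ℝ] (Fin 9 → ℝ))
    (anti : ∀ v w : Fin 9 → ℝ, β v w = -β w v)
    (jac : ∀ u v w : Fin 9 → ℝ, β u (β v w) = β (β u v) w + β v (β u w))
    (hTx : β (E 8) (E 7) = -E 7)
    (hTe : ∀ i : ℕ, i ≤ 6 → β (E 8) (E i) = ((i : ℝ) - 4) • E i)
    (hxe0 : β (E 7) (E 0) = 0)
    (hxe : ∀ i : ℕ, 1 ≤ i → i ≤ 6 → β (E 7) (E i) = E (i - 1))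
    (hlow : ∀ i j : ℕ, i ≤ 6 → j ≤ 6 → i < j → i + j < 4 → β (E i) (E j) = 0)
    (hspan : ∀ i j : ℕ, i ≤ 6 → j ≤ 6 → i < j →
      β (E i) (E j) ∈ Submodule.span ℝ
        ((if 4 ≤ i + j ∧ i + j ≤ 10 then ({E (i + j - 4)} : Set (Fin 9 → ℝ)) else ∅) ∪
         (if i + j = 7 then ({E 7} : Set (Fin 9 → ℝ)) else ∅) ∪
         (if i + j = 8 then ({E 8} : Set (Fin 9 → ℝ)) else ∅))) :
    ∀ i j : ℕ, i ≤ 6 → j ≤ 6 → β (E i) (E j) = 0 := by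
  have self_zero (v : Fin 9 → ℝ) : β v v = 0 := self_eq_neg.mp (anti v v)
  have deriv (i j : ℕ) (hi : i < 6) (hj : j < 6) :
      β (E 7) (β (E (i + 1)) (E (j + 1))) =
        β (E i) (E (j + 1)) + β (E (i + 1)) (E j) := by
    rw [jac, hxe (i + 1) (by omega) (by omega), hxe (j + 1) (by omega) (by omega)]
    simp
  have smul_eq_zero_of_lt (l : ℕ) (hl : l < 9) (t : ℝ) (h : t • E l = 0) : t = 0 := by
    rw [hE l hl] at h
    simpa using congrFun h ⟨l, hl⟩
  have x1 : β (E 7) (E 1) = E 0 := hxe 1 (by norm_num) (by norm_num)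
  have x2 : β (E 7) (E 2) = E 1 := hxe 2 (by norm_num) (by norm_num)
  have x3 : β (E 7) (E 3) = E 2 := hxe 3 (by norm_num) (by norm_num)
  have x4 : β (E 7) (E 4) = E 3 := hxe 4 (by norm_num) (by norm_num)
  have x5 : β (E 7) (E 5) = E 4 := hxe 5 (by norm_num) (by norm_num)
  have x6 : β (E 7) (E 6) = E 5 := hxe 6 (by norm_num) (by norm_num)
  have x7 : β (E 7) (E 7) = 0 := self_zero _
  -- All brackets are determined by `p`, `r`, `y` through the derivation property of `x`.
  have b56 : β (E 5) (E 6) = 0 := by simpa using hspan 5 6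
  obtain ⟨p, b36⟩ : ∃ p : ℝ, β (E 3) (E 6) = p • E 5 := by
    have h := hspan 3 6 (by norm_num) (by norm_num) (by norm_num)
    norm_num [Submodule.mem_span_singleton] at h
    exact h.imp fun _ => Eq.symm
  obtain ⟨r, y, b25⟩ : ∃ r y : ℝ, β (E 2) (E 5) = r • E 3 + y • E 7 := by
    have h := hspan 2 5 (by norm_num) (by norm_num) (by norm_num)
    norm_num at h
    obtain ⟨r, y, h⟩ := Submodule.mem_span_pair.mp (Set.pair_comm (E 7) (E 3) ▸ h)
    exact ⟨r, y, h.symm⟩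
  have b46 : β (E 4) (E 6) = 0 := by
    simpa [b56, self_zero] using (deriv 4 5 (by norm_num) (by norm_num)).symm
  have b45 : β (E 4) (E 5) = -p • E 5 := by
    have h := deriv 3 5 (by norm_num) (by norm_num)
    simp only [Nat.reduceAdd, b46, b36, map_zero] at h
    linear_combination (norm := module) -h
  have b35 : β (E 3) (E 5) = -p • E 4 := by
    have h := deriv 3 4 (by norm_num) (by norm_num)
    simp only [Nat.reduceAdd, b45, self_zero, map_smul, x5] at h
    linear_combination (norm := module) -h
  have b26 : β (E 2) (E 6) = (2 * p) • E 4 := by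
    have h := deriv 2 5 (by norm_num) (by norm_num)
    simp only [Nat.reduceAdd, b36, b35, map_smul, x5] at h
    linear_combination (norm := module) -h
  have b34 : β (E 3) (E 4) = (-p - r) • E 3 - y • E 7 := by
    have h := deriv 2 4 (by norm_num) (by norm_num)
    simp only [Nat.reduceAdd, b35, b25, map_smul, x4] at h
    linear_combination (norm := module) -h
  have b16 : β (E 1) (E 6) = (2 * p - r) • E 3 - y • E 7 := by
    have h := deriv 1 5 (by norm_num) (by norm_num)
    simp only [Nat.reduceAdd, b26, b25, map_smul, x4] at h
    linear_combination (norm := module) -h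
  have b24 : β (E 2) (E 4) = (-p - r) • E 2 := by
    have h := deriv 2 3 (by norm_num) (by norm_num)
    simp only [Nat.reduceAdd, b34, self_zero, map_smul, map_sub, x3] at h
    linear_combination (norm := module) -h
  have b15 : β (E 1) (E 5) = (p + 2 * r) • E 2 := by
    have h := deriv 1 4 (by norm_num) (by norm_num)
    simp only [Nat.reduceAdd, b25, b24, map_smul, map_add, x3, x7] at h
    linear_combination (norm := module) -h
  have b06 : β (E 0) (E 6) = (p - 3 * r) • E 2 := by
    have h := deriv 0 5 (by norm_num) (by norm_num)
    simp only [Nat.reduceAdd, b16, b15, map_smul, map_sub, x3, x7] at h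
    linear_combination (norm := module) -h
  have b05 : β (E 0) (E 5) = (p - 3 * r) • E 1 := by
    have h := jac (E 7) (E 0) (E 6)
    simp only [b06, hxe0, x6, x2, map_smul, map_zero, LinearMap.zero_apply] at h
    linear_combination (norm := module) -h
  have b14 : β (E 1) (E 4) = (5 * r) • E 1 := by
    have h := deriv 0 4 (by norm_num) (by norm_num)
    simp only [Nat.reduceAdd, b15, b05, map_smul, x2] at h
    linear_combination (norm := module) -h
  have b23 : β (E 2) (E 3) = (-p - 6 * r) • E 1 := by
    have h := deriv 1 3 (by norm_num) (by norm_num)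
    simp only [Nat.reduceAdd, b24, b14, map_smul, x2] at h
    linear_combination (norm := module) -h
  have b04 : β (E 0) (E 4) = (p - 3 * r) • E 0 := by
    have h := jac (E 7) (E 0) (E 5)
    simp only [b05, hxe0, x5, x1, map_smul, map_zero, LinearMap.zero_apply] at h
    linear_combination (norm := module) -h
  have b13 : β (E 1) (E 3) = (-p + 8 * r) • E 0 := by
    have h := deriv 0 3 (by norm_num) (by norm_num)
    simp only [Nat.reduceAdd, b14, b04, map_smul, x1] at h
    linear_combination (norm := module) -h
  have r_zero : r = 0 := by
    have h := deriv 1 2 (by norm_num) (by norm_num)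
    simp only [Nat.reduceAdd, b23, b13, self_zero, map_smul, x1] at h
    have := smul_eq_zero_of_lt 0 (by norm_num) (14 * r) (by linear_combination (norm := module) -h)
    linarith
  subst r_zero
  have b12 : β (E 1) (E 2) = 0 := hlow 1 2 (by norm_num) (by norm_num) (by norm_num) (by norm_num)
  -- The Jacobi identities on `(e₂, e₅, e₆)` and `(e₂, e₁, e₆)` give `y = ∓2p²`.
  have y_eq_neg : y = -(2 * p ^ 2) := by
    have h := jac (E 2) (E 5) (E 6)
    simp only [b56, b25, b26, anti (E 5) (E 4), b45, x6, map_smul, map_add, map_zero,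
      LinearMap.add_apply, LinearMap.smul_apply, zero_smul, LinearMap.zero_apply] at h
    have := smul_eq_zero_of_lt 5 (by norm_num) (y + 2 * p ^ 2)
      (by linear_combination (norm := module) -h)
    linarith
  have y_eq : y = 2 * p ^ 2 := by
    have h := jac (E 2) (E 1) (E 6)
    simp only [b16, b23, b26, b14, anti (E 2) (E 1), anti (E 2) (E 7), b12, x2, map_smul, map_sub,
      map_zero, neg_zero, LinearMap.zero_apply] at h
    have := smul_eq_zero_of_lt 1 (by norm_num) (y - 2 * p ^ 2)
      (by linear_combination (norm := module) h)
    linarith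
  have p_zero : p = 0 := by
    have : p ^ 2 = 0 := by linarith
    simpa using this
  subst p_zero
  have y_zero : y = 0 := by simpa using y_eq
  subst y_zero
  have zero_of_lt (i j : ℕ) (hj : j ≤ 6) (hij : i < j) : β (E i) (E j) = 0 := by
    by_cases hlt : i + j < 4
    · exact hlow i j (by omega) hj hij hlt
    · interval_cases j <;> interval_cases i <;> first
        | omega
        | simp [b04, b05, b06, b13, b14, b15, b16, b23, b24, b25, b26, b34, b35, b36, b45]
  intro i j hi hj
  rcases lt_trichotomy i j with h | rfl | h
  · exact zero_of_lt i j hj h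
  · exact self_zero _
  · rw [anti, zero_of_lt j i hi h, neg_zero]
end

section
/- Let n ≥ 3 and m ≥ 2 be integers. On ℝ^{1+m} with coordinates (t, u¹, …, u^m), consider the smooth vector fields: ∂_t; ∂_{u^c} for all 1 ≤ c ≤ m; t^i ∂_{u²} for 1 ≤ i ≤ n−1; t^j ∂_{u^a} for all a ≠ 2 and 1 ≤ j ≤ n; u^b ∂_{u^a} for all b ≠ 1 and a ≠ 2; t∂_t − (n−1)u¹∂_{u¹}; 2u¹∂_{u¹} + u²∂_{u²}; and 2tu²∂_{u¹} + ((n+1)t^n/n!)∂_{u²}. These m² + (n−1)m + 4 vector fields are linearly independent over ℝ and their real span is closed under the Lie bracket of vector fields; hence they span a Lie subalgebra of the Lie algebra of smooth vector fields on ℝ^{1+m} of dimension m² + (n+1)m + 3 − (2m − 1) = 𝔐 − 2m + 1, where 𝔐 = m² + (n+1)m + 3. -/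
namespace PointSymmetry

open VectorField

variable {ι : Type*} [Fintype ι] [DecidableEq ι]

/-- The vector field `t^k ∂_a`, where `t` is the coordinate with index `o`. -/
def powField (o a : ι) (k : ℕ) : (ι → ℝ) → (ι → ℝ) := fun p => Pi.single a (p o ^ k)

lemma powField_zero {κ : Type*} [DecidableEq κ] (o a : κ) :
    powField o a 0 = fun _ => Pi.single a 1 := by
  funext p
  simp [powField]

/-- The vector field `u^b ∂_a`. -/
def linField (b a : ι) : (ι → ℝ) → (ι → ℝ) := fun p => Pi.single a (p b)

/-- The vector field `t ∂_t − (n−1) u^x ∂_x`. -/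
def timeScaling (o x : ι) (n : ℕ) : (ι → ℝ) → (ι → ℝ) :=
  fun p => Pi.single o (p o) - ((n : ℝ) - 1) • Pi.single x (p x)

/-- The vector field `2 u^x ∂_x + u^y ∂_y`. -/
def weightScaling (x y : ι) : (ι → ℝ) → (ι → ℝ) :=
  fun p => (2 : ℝ) • Pi.single x (p x) + Pi.single y (p y)

/-- The vector field `2 t u^y ∂_x + ((n+1) t^n / n!) ∂_y`. -/
noncomputable def mixedField (o x y : ι) (n : ℕ) : (ι → ℝ) → (ι → ℝ) :=
  fun p => Pi.single x (2 * p o * p y) +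
    Pi.single y (((n : ℝ) + 1) * p o ^ n / (n.factorial : ℝ))

/-- The generating point symmetries, with `o`, `x`, `y` the indices of `t`, `u¹`, `u²`. -/
inductive Generator (o x y : ι) (n : ℕ) : ((ι → ℝ) → (ι → ℝ)) → Prop
  | time : Generator o x y n (powField o o 0)
  | timeScaling : Generator o x y n (timeScaling o x n)
  | weightScaling : Generator o x y n (weightScaling x y)
  | mixed : Generator o x y n (mixedField o x y n)
  | pow (a : ι) (k : ℕ) (hao : a ≠ o) (hk : k ≤ n) (hy : a = y → k < n) :
      Generator o x y n (powField o a k)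
  | lin (b a : ι) (hbo : b ≠ o) (hbx : b ≠ x) (hao : a ≠ o) (hay : a ≠ y) :
      Generator o x y n (linField b a)

lemma hasFDerivAt_single {f : (ι → ℝ) → ℝ} {f' : (ι → ℝ) →L[ℝ] ℝ} {p : ι → ℝ} (a : ι)
    (h : HasFDerivAt f f' p) :
    HasFDerivAt (fun q => (Pi.single a (f q) : ι → ℝ))
      ((ContinuousLinearMap.single ℝ (fun _ : ι => ℝ) a).comp f') p :=
  (ContinuousLinearMap.single ℝ (fun _ : ι => ℝ) a).hasFDerivAt.comp p h

lemma differentiable_single {f : (ι → ℝ) → ℝ} (a : ι) (h : Differentiable ℝ f) :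
    Differentiable ℝ (fun q => (Pi.single a (f q) : ι → ℝ)) :=
  fun p => (hasFDerivAt_single a (h p).hasFDerivAt).differentiableAt

lemma fderiv_powField (o a : ι) (k : ℕ) (p v : ι → ℝ) :
    fderiv ℝ (powField o a k) p v = Pi.single a (k * p o ^ (k - 1) * v o) := by
  have ho := hasFDerivAt_apply (𝕜 := ℝ) (F' := fun _ : ι => ℝ) o p
  unfold powField
  rw [(hasFDerivAt_single a (ho.pow k)).fderiv]
  simp [← Pi.single_smul']

lemma fderiv_linField (b a : ι) (p v : ι → ℝ) :
    fderiv ℝ (linField b a) p v = Pi.single a (v b) := by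
  have hb := hasFDerivAt_apply (𝕜 := ℝ) (F' := fun _ : ι => ℝ) b p
  unfold linField
  rw [(hasFDerivAt_single a hb).fderiv]
  simp

lemma fderiv_timeScaling (o x : ι) (n : ℕ) (p v : ι → ℝ) :
    fderiv ℝ (timeScaling o x n) p v = timeScaling o x n v := by
  have ho := hasFDerivAt_apply (𝕜 := ℝ) (F' := fun _ : ι => ℝ) o p
  have hx := hasFDerivAt_apply (𝕜 := ℝ) (F' := fun _ : ι => ℝ) x p
  unfold timeScaling
  rw [((hasFDerivAt_single o ho).fun_sub
    ((hasFDerivAt_single x hx).fun_const_smul ((n : ℝ) - 1))).fderiv]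
  simp

lemma fderiv_weightScaling (x y : ι) (p v : ι → ℝ) :
    fderiv ℝ (weightScaling x y) p v = weightScaling x y v := by
  have hx := hasFDerivAt_apply (𝕜 := ℝ) (F' := fun _ : ι => ℝ) x p
  have hy := hasFDerivAt_apply (𝕜 := ℝ) (F' := fun _ : ι => ℝ) y p
  unfold weightScaling
  rw [(((hasFDerivAt_single x hx).fun_const_smul (2 : ℝ)).fun_add
    (hasFDerivAt_single y hy)).fderiv]
  simp

lemma fderiv_mixedField (o x y : ι) (n : ℕ) (p v : ι → ℝ) :
    fderiv ℝ (mixedField o x y n) p v = Pi.single x (2 * p o * v y + 2 * v o * p y) +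
      Pi.single y (((n : ℝ) + 1) * (n * p o ^ (n - 1) * v o) / (n.factorial : ℝ)) := by
  have ho := hasFDerivAt_apply (𝕜 := ℝ) (F' := fun _ : ι => ℝ) o p
  have hy := hasFDerivAt_apply (𝕜 := ℝ) (F' := fun _ : ι => ℝ) y p
  unfold mixedField
  simp only [div_eq_mul_inv]
  rw [((hasFDerivAt_single x ((ho.const_mul 2).fun_mul hy)).fun_add
    (hasFDerivAt_single y (((ho.pow n).const_mul ((n : ℝ) + 1)).mul_const
      ((n.factorial : ℝ)⁻¹)))).fderiv]
  ext i
  simp [Pi.single_apply]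
  split_ifs <;> ring

lemma Generator.differentiable {o x y : ι} {n : ℕ} {X : (ι → ℝ) → (ι → ℝ)}
    (hX : Generator o x y n X) : Differentiable ℝ X := by
  cases hX with
  | time => exact differentiable_single o (by fun_prop)
  | timeScaling =>
    exact (differentiable_single o (by fun_prop)).sub
      ((differentiable_single x (by fun_prop)).const_smul ((n : ℝ) - 1))
  | weightScaling =>
    exact ((differentiable_single x (by fun_prop)).const_smul (2 : ℝ)).add
      (differentiable_single y (by fun_prop))
  | mixed =>
    exact (differentiable_single x (by fun_prop)).add (differentiable_single y (by fun_prop))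
  | pow a k => exact differentiable_single a (by fun_prop)
  | lin b a => exact differentiable_single a (by fun_prop)

section Brackets

variable {o x y a b c d : ι} {k l n : ℕ}

lemma lieBracket_time_timeScaling (hox : o ≠ x) :
    lieBracket ℝ (powField o o 0) (timeScaling o x n) = powField o o 0 := by
  ext p i
  simp [lieBracket, fderiv_powField, fderiv_timeScaling, timeScaling, powField, Pi.single_apply,
    hox.symm]

lemma lieBracket_time_weightScaling (hox : o ≠ x) (hoy : o ≠ y) :
    lieBracket ℝ (powField o o 0) (weightScaling x y) = 0 := by
  ext p i
  simp [lieBracket, fderiv_powField, fderiv_weightScaling, weightScaling, powField,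
    hox.symm, hoy.symm]

lemma lieBracket_time_mixedField (hoy : o ≠ y) :
    lieBracket ℝ (powField o o 0) (mixedField o x y n) =
      (2 : ℝ) • linField y x +
        (((n : ℝ) + 1) * n / (n.factorial : ℝ)) • powField o y (n - 1) := by
  ext p i
  simp [lieBracket, fderiv_powField, fderiv_mixedField, linField, powField,
    Pi.single_apply, hoy.symm]
  split_ifs <;> ring

lemma lieBracket_time_powField :
    lieBracket ℝ (powField o o 0) (powField o a k) = (k : ℝ) • powField o a (k - 1) := by
  ext p i
  simp [lieBracket, fderiv_powField, powField, Pi.single_apply]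

lemma lieBracket_time_linField (hbo : b ≠ o) :
    lieBracket ℝ (powField o o 0) (linField b a) = 0 := by
  ext p i
  simp [lieBracket, fderiv_powField, fderiv_linField, powField, hbo]

lemma lieBracket_powField_powField (ha : a ≠ o) (hb : b ≠ o) :
    lieBracket ℝ (powField o a k) (powField o b l) = 0 := by
  ext p i
  simp [lieBracket, fderiv_powField, powField, ha.symm, hb.symm]

lemma lieBracket_powField_linField (hd : d ≠ o) :
    lieBracket ℝ (powField o a k) (linField b d) =
      (if a = b then 1 else 0 : ℝ) • powField o d k := by
  ext p i
  simp [lieBracket, fderiv_powField, fderiv_linField, powField, linField, Pi.single_apply,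
    hd.symm, eq_comm (a := b)]

lemma lieBracket_powField_timeScaling (hox : o ≠ x) (ha : a ≠ o) :
    lieBracket ℝ (powField o a k) (timeScaling o x n) =
      (-(if a = x then (n : ℝ) - 1 else 0) - k) • powField o a k := by
  ext p i
  rcases k with - | k <;>
  simp [lieBracket, fderiv_powField, fderiv_timeScaling, powField, timeScaling, Pi.single_apply,
    hox, ha.symm, eq_comm (a := x) (b := a)] <;>
  split_ifs <;> simp_all <;> ring

lemma lieBracket_powField_weightScaling (hox : o ≠ x) (hoy : o ≠ y) (hxy : x ≠ y) :
    lieBracket ℝ (powField o a k) (weightScaling x y) =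
      ((if a = x then 2 else 0) + (if a = y then 1 else 0) : ℝ) • powField o a k := by
  ext p i
  simp [lieBracket, fderiv_powField, fderiv_weightScaling, powField, weightScaling,
    Pi.single_apply, hox, hoy]
  grind

lemma lieBracket_powField_mixedField (hox : o ≠ x) (hoy : o ≠ y) (ha : a ≠ o) :
    lieBracket ℝ (powField o a k) (mixedField o x y n) =
      (if a = y then 2 else 0 : ℝ) • powField o x (k + 1) := by
  ext p i
  simp [lieBracket, fderiv_powField, fderiv_mixedField, powField, mixedField,
    Pi.single_apply, hox, hoy, ha.symm, eq_comm (a := y) (b := a)]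
  split_ifs <;> ring

lemma lieBracket_linField_linField :
    lieBracket ℝ (linField b a) (linField d c) =
      (if a = d then 1 else 0 : ℝ) • linField b c - (if c = b then 1 else 0 : ℝ) • linField d a := by
  ext p i
  simp [lieBracket, fderiv_linField, linField, Pi.single_apply, eq_comm (a := d) (b := a),
    eq_comm (a := b) (b := c), -ite_smul]

lemma lieBracket_linField_timeScaling (hbo : b ≠ o) (hbx : b ≠ x) (ha : a ≠ o) :
    lieBracket ℝ (linField b a) (timeScaling o x n) =
      (if a = x then 1 - (n : ℝ) else 0) • linField b a := by
  ext p i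
  simp [lieBracket, fderiv_linField, fderiv_timeScaling, linField, timeScaling, Pi.single_apply,
    hbo, hbx, ha.symm]
  grind

lemma lieBracket_linField_weightScaling (hbx : b ≠ x) (hay : a ≠ y) :
    lieBracket ℝ (linField b a) (weightScaling x y) =
      ((if a = x then 2 else 0) - (if b = y then 1 else 0) : ℝ) • linField b a := by
  ext p i
  simp [lieBracket, fderiv_linField, fderiv_weightScaling, linField, weightScaling,
    Pi.single_apply, hbx, hay.symm]
  grind

lemma lieBracket_linField_mixedField (hbx : b ≠ x) (hao : a ≠ o) (hay : a ≠ y) :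
    lieBracket ℝ (linField b a) (mixedField o x y n) =
      (if b = y then -(((n : ℝ) + 1) / (n.factorial : ℝ)) else 0) • powField o a n := by
  ext p i
  simp [lieBracket, fderiv_linField, fderiv_mixedField, linField, powField, mixedField,
    Pi.single_apply, hbx, hao.symm, hay.symm]
  split_ifs <;> ring

lemma lieBracket_timeScaling_weightScaling (hox : o ≠ x) (hoy : o ≠ y) (hxy : x ≠ y) :
    lieBracket ℝ (timeScaling o x n) (weightScaling x y) = 0 := by
  ext p i
  simp [lieBracket, fderiv_timeScaling, fderiv_weightScaling, timeScaling, weightScaling,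
    Pi.single_apply, hox, hoy, hxy, hox.symm, hoy.symm, hxy.symm]
  split_ifs <;> ring

lemma lieBracket_timeScaling_mixedField (hox : o ≠ x) (hoy : o ≠ y) (hxy : x ≠ y) :
    lieBracket ℝ (timeScaling o x n) (mixedField o x y n) = (n : ℝ) • mixedField o x y n := by
  ext p i
  rcases n with - | n
  · simp [lieBracket, fderiv_timeScaling, fderiv_mixedField, timeScaling, mixedField,
      Pi.single_apply, hox, hoy, hxy, hoy.symm, hxy.symm]
  · simp [lieBracket, fderiv_timeScaling, fderiv_mixedField, timeScaling, mixedField,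
      Pi.single_apply, hox, hoy, hxy, hoy.symm, hxy.symm]
    split_ifs <;> ring

lemma lieBracket_weightScaling_mixedField (hox : o ≠ x) (hoy : o ≠ y) (hxy : x ≠ y) :
    lieBracket ℝ (weightScaling x y) (mixedField o x y n) = (-1 : ℝ) • mixedField o x y n := by
  ext p i
  simp [lieBracket, fderiv_weightScaling, fderiv_mixedField, weightScaling, mixedField,
    Pi.single_apply, hox, hoy, hxy, hxy.symm]
  split_ifs
  all_goals simp_all
  all_goals ring

end Brackets

lemma lieBracket_mem_swap {E : Type*} [NormedAddCommGroup E] [NormedSpace ℝ E]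
    {W : Submodule ℝ (E → E)} {X Y : E → E} (h : lieBracket ℝ X Y ∈ W) :
    lieBracket ℝ Y X ∈ W := by
  have hs : lieBracket ℝ Y X = -lieBracket ℝ X Y := by
    ext1 p
    exact lieBracket_swap
  rw [hs]
  exact W.neg_mem h

section Closure

variable {o x y : ι} {n : ℕ}

/-- Brackets with `∂_t` stay in the span of the generators. -/
lemma lieBracket_time_mem (hn : 3 ≤ n) (hox : o ≠ x) (hoy : o ≠ y) (hxy : x ≠ y)
    {Y : (ι → ℝ) → (ι → ℝ)} (hY : Generator o x y n Y) :
    lieBracket ℝ (powField o o 0) Y ∈ Submodule.span ℝ {X | Generator o x y n X} := by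
  cases hY with
  | time => simp
  | timeScaling =>
    rw [lieBracket_time_timeScaling hox]
    exact Submodule.subset_span .time
  | weightScaling =>
    rw [lieBracket_time_weightScaling hox hoy]
    exact Submodule.zero_mem _
  | mixed =>
    rw [lieBracket_time_mixedField hoy]
    refine Submodule.add_mem _ (Submodule.smul_mem _ _ (Submodule.subset_span ?_))
      (Submodule.smul_mem _ _ (Submodule.subset_span ?_))
    · exact .lin y x hoy.symm hxy.symm hox.symm hxy
    · exact .pow y (n - 1) hoy.symm (by omega) (by omega)
  | pow a k ha hk hy =>
    rw [lieBracket_time_powField]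
    exact Submodule.smul_mem _ _ (Submodule.subset_span
      (.pow a (k - 1) ha (by omega) fun h => by have := hy h; omega))
  | lin b a hbo =>
    rw [lieBracket_time_linField hbo]
    exact Submodule.zero_mem _

/-- Brackets with `t^k ∂_a` stay in the span of the generators. -/
lemma lieBracket_powField_mem (hn : 3 ≤ n) (hox : o ≠ x) (hoy : o ≠ y) (hxy : x ≠ y)
    {a : ι} {k : ℕ} (ha : a ≠ o) (hk : k ≤ n) (hy : a = y → k < n)
    {Y : (ι → ℝ) → (ι → ℝ)} (hY : Generator o x y n Y) :
    lieBracket ℝ (powField o a k) Y ∈ Submodule.span ℝ {X | Generator o x y n X} := by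
  have hmem : powField o a k ∈ Submodule.span ℝ {X | Generator o x y n X} :=
    Submodule.subset_span (.pow a k ha hk hy)
  cases hY with
  | time => exact lieBracket_mem_swap (lieBracket_time_mem hn hox hoy hxy (.pow a k ha hk hy))
  | timeScaling =>
    rw [lieBracket_powField_timeScaling hox ha]
    exact Submodule.smul_mem _ _ hmem
  | weightScaling =>
    rw [lieBracket_powField_weightScaling hox hoy hxy]
    exact Submodule.smul_mem _ _ hmem
  | mixed =>
    rw [lieBracket_powField_mixedField hox hoy ha]
    split_ifs with h
    · exact Submodule.smul_mem _ _ (Submodule.subset_span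
        (.pow x (k + 1) hox.symm (hy h) fun h' => absurd h' hxy))
    · rw [zero_smul]
      exact Submodule.zero_mem _
  | pow b l hb =>
    rw [lieBracket_powField_powField ha hb]
    exact Submodule.zero_mem _
  | lin b d hbo hbx hdo hdy =>
    rw [lieBracket_powField_linField hdo]
    exact Submodule.smul_mem _ _ (Submodule.subset_span
      (.pow d k hdo hk fun h => absurd h hdy))

/-- Brackets with `u^b ∂_a` stay in the span of the generators. -/
lemma lieBracket_linField_mem (hn : 3 ≤ n) (hox : o ≠ x) (hoy : o ≠ y) (hxy : x ≠ y)
    {a b : ι} (hbo : b ≠ o) (hbx : b ≠ x) (hao : a ≠ o) (hay : a ≠ y)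
    {Y : (ι → ℝ) → (ι → ℝ)} (hY : Generator o x y n Y) :
    lieBracket ℝ (linField b a) Y ∈ Submodule.span ℝ {X | Generator o x y n X} := by
  have hgen : Generator o x y n (linField b a) := .lin b a hbo hbx hao hay
  have hmem := Submodule.subset_span (R := ℝ) (s := {X | Generator o x y n X}) hgen
  cases hY with
  | time => exact lieBracket_mem_swap (lieBracket_time_mem hn hox hoy hxy hgen)
  | timeScaling =>
    rw [lieBracket_linField_timeScaling hbo hbx hao]
    exact Submodule.smul_mem _ _ hmem
  | weightScaling =>
    rw [lieBracket_linField_weightScaling hbx hay]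
    exact Submodule.smul_mem _ _ hmem
  | mixed =>
    rw [lieBracket_linField_mixedField hbx hao hay]
    exact Submodule.smul_mem _ _ (Submodule.subset_span
      (.pow a n hao le_rfl fun h => absurd h hay))
  | pow c k hc hk hy =>
    exact lieBracket_mem_swap (lieBracket_powField_mem hn hox hoy hxy hc hk hy hgen)
  | lin d c hdo hdx hco hcy =>
    rw [lieBracket_linField_linField]
    exact Submodule.sub_mem _
      (Submodule.smul_mem _ _ (Submodule.subset_span (.lin b c hbo hbx hco hcy)))
      (Submodule.smul_mem _ _ (Submodule.subset_span (.lin d a hdo hdx hao hay)))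

lemma Generator.lieBracket_mem (hn : 3 ≤ n) (hox : o ≠ x) (hoy : o ≠ y) (hxy : x ≠ y)
    {X Y : (ι → ℝ) → (ι → ℝ)} (hX : Generator o x y n X) (hY : Generator o x y n Y) :
    lieBracket ℝ X Y ∈ Submodule.span ℝ {X | Generator o x y n X} := by
  have hTS : lieBracket ℝ (PointSymmetry.timeScaling o x n) (PointSymmetry.weightScaling x y) ∈
      Submodule.span ℝ {X | Generator o x y n X} := by
    rw [lieBracket_timeScaling_weightScaling hox hoy hxy]
    exact Submodule.zero_mem _
  have hTE : lieBracket ℝ (PointSymmetry.timeScaling o x n) (mixedField o x y n) ∈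
      Submodule.span ℝ {X | Generator o x y n X} := by
    rw [lieBracket_timeScaling_mixedField hox hoy hxy]
    exact Submodule.smul_mem _ _ (Submodule.subset_span .mixed)
  have hSE : lieBracket ℝ (PointSymmetry.weightScaling x y) (mixedField o x y n) ∈
      Submodule.span ℝ {X | Generator o x y n X} := by
    rw [lieBracket_weightScaling_mixedField hox hoy hxy]
    exact Submodule.smul_mem _ _ (Submodule.subset_span .mixed)
  cases hX with
  | time => exact lieBracket_time_mem hn hox hoy hxy hY
  | pow a k ha hk hy => exact lieBracket_powField_mem hn hox hoy hxy ha hk hy hY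
  | lin b a hbo hbx hao hay => exact lieBracket_linField_mem hn hox hoy hxy hbo hbx hao hay hY
  | timeScaling =>
    cases hY with
    | time => exact lieBracket_mem_swap (lieBracket_time_mem hn hox hoy hxy .timeScaling)
    | pow a k ha hk hy =>
      exact lieBracket_mem_swap (lieBracket_powField_mem hn hox hoy hxy ha hk hy .timeScaling)
    | lin b a hbo hbx hao hay =>
      exact lieBracket_mem_swap
        (lieBracket_linField_mem hn hox hoy hxy hbo hbx hao hay .timeScaling)
    | timeScaling => simp
    | weightScaling => exact hTS
    | mixed => exact hTE
  | weightScaling =>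
    cases hY with
    | time => exact lieBracket_mem_swap (lieBracket_time_mem hn hox hoy hxy .weightScaling)
    | pow a k ha hk hy =>
      exact lieBracket_mem_swap (lieBracket_powField_mem hn hox hoy hxy ha hk hy .weightScaling)
    | lin b a hbo hbx hao hay =>
      exact lieBracket_mem_swap
        (lieBracket_linField_mem hn hox hoy hxy hbo hbx hao hay .weightScaling)
    | timeScaling => exact lieBracket_mem_swap hTS
    | weightScaling => simp
    | mixed => exact hSE
  | mixed =>
    cases hY with
    | time => exact lieBracket_mem_swap (lieBracket_time_mem hn hox hoy hxy .mixed)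
    | pow a k ha hk hy =>
      exact lieBracket_mem_swap (lieBracket_powField_mem hn hox hoy hxy ha hk hy .mixed)
    | lin b a hbo hbx hao hay =>
      exact lieBracket_mem_swap (lieBracket_linField_mem hn hox hoy hxy hbo hbx hao hay .mixed)
    | timeScaling => exact lieBracket_mem_swap hTE
    | weightScaling => exact lieBracket_mem_swap hSE
    | mixed => simp

end Closure

/-- If the brackets of differentiable vector fields in `S` lie in the span of `S`, then that span
is closed under the bracket. -/
lemma lieBracket_mem_span {E : Type*} [NormedAddCommGroup E] [NormedSpace ℝ E] {S : Set (E → E)}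
    (hd : ∀ X ∈ S, Differentiable ℝ X)
    (hS : ∀ X ∈ S, ∀ Y ∈ S, lieBracket ℝ X Y ∈ Submodule.span ℝ S)
    {X Y : E → E} (hX : X ∈ Submodule.span ℝ S) (hY : Y ∈ Submodule.span ℝ S) :
    lieBracket ℝ X Y ∈ Submodule.span ℝ S := by
  have hdiff : ∀ Z ∈ Submodule.span ℝ S, Differentiable ℝ Z := fun Z hZ => by
    induction hZ using Submodule.span_induction with
    | mem Z h => exact hd Z h
    | zero => exact differentiable_const 0
    | add Z Z' _ _ h h' => exact h.add h'
    | smul r Z _ h => exact h.const_smul r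
  induction hX using Submodule.span_induction with
  | zero =>
    convert Submodule.zero_mem (Submodule.span ℝ S)
    ext1 p
    simp [lieBracket]
  | add Z Z' hZ hZ' h h' =>
    convert Submodule.add_mem _ h h'
    ext1 p
    exact lieBracket_add_left (hdiff Z hZ p) (hdiff Z' hZ' p)
  | smul r Z hZ h =>
    convert Submodule.smul_mem _ r h
    ext1 p
    exact lieBracket_const_smul_left (hdiff Z hZ p)
  | mem X hXS =>
    induction hY using Submodule.span_induction with
    | mem Y hYS => exact hS X hXS Y hYS
    | zero =>
      convert Submodule.zero_mem (Submodule.span ℝ S)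
      ext1 p
      simp [lieBracket]
    | add Z Z' hZ hZ' h h' =>
      convert Submodule.add_mem _ h h'
      ext1 p
      exact lieBracket_add_right (hdiff Z hZ p) (hdiff Z' hZ' p)
    | smul r Z hZ h =>
      convert Submodule.smul_mem _ r h
      ext1 p
      exact lieBracket_const_smul_right (hdiff Z hZ p)

lemma eq_zero_of_forall_sum_pow_eq_zero {N : ℕ} {c : ℝ} {d : Fin N → ℝ}
    (h : ∀ t : ℝ, c + ∑ j, d j * t ^ ((j : ℕ) + 1) = 0) : c = 0 ∧ ∀ j, d j = 0 := by
  have hP : Polynomial.C c + ∑ j, Polynomial.C (d j) * Polynomial.X ^ ((j : ℕ) + 1) = 0 := by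
    refine Polynomial.funext fun t => ?_
    simpa [Polynomial.eval_finsetSum] using h t
  constructor
  · simpa [Polynomial.finsetSum_coeff, Polynomial.coeff_X_pow] using
      congrArg (fun P => P.coeff 0) hP
  · intro j
    simpa [Polynomial.finsetSum_coeff, Polynomial.coeff_X_pow, Polynomial.coeff_C, Fin.val_inj]
      using congrArg (fun P => P.coeff ((j : ℕ) + 1)) hP

/-- The enumeration of the indices of `u^a`, `a ≠ 2`. -/
def targetIndex {m : ℕ} (hm : 2 ≤ m) (a : Fin (m - 1)) : Fin (m + 1) :=
  if (a : ℕ) = 0 then ⟨1, by omega⟩ else ⟨(a : ℕ) + 2, by have := a.isLt; omega⟩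

/-- The enumeration of the indices of `u^b`, `b ≠ 1`. -/
def sourceIndex {m : ℕ} (b : Fin (m - 1)) : Fin (m + 1) :=
  ⟨(b : ℕ) + 2, by have := b.isLt; omega⟩

lemma targetIndex_val {m : ℕ} (hm : 2 ≤ m) (a : Fin (m - 1)) :
    (targetIndex hm a : ℕ) = if (a : ℕ) = 0 then 1 else (a : ℕ) + 2 := by
  unfold targetIndex
  split_ifs <;> rfl

lemma targetIndex_injective {m : ℕ} (hm : 2 ≤ m) : Function.Injective (targetIndex hm) := by
  intro a b h
  have h' := congrArg Fin.val h
  rw [targetIndex_val, targetIndex_val] at h'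
  ext
  split_ifs at h' <;> omega

lemma sourceIndex_injective {m : ℕ} : Function.Injective (sourceIndex (m := m)) := by
  intro a b h
  have h' := congrArg Fin.val h
  simp only [sourceIndex] at h'
  ext
  omega

lemma targetIndex_ne_zero {m : ℕ} (hm : 2 ≤ m) (a : Fin (m - 1)) : targetIndex hm a ≠ 0 := by
  intro h
  have h' := congrArg Fin.val h
  rw [targetIndex_val] at h'
  split_ifs at h' <;> simp at h'

lemma targetIndex_ne_two {m : ℕ} (hm : 2 ≤ m) (a : Fin (m - 1)) :
    targetIndex hm a ≠ ⟨2, by omega⟩ := by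
  intro h
  have h' := congrArg Fin.val h
  rw [targetIndex_val] at h'
  split_ifs at h' <;> simp at h'
  omega

lemma exists_targetIndex_eq {m : ℕ} (hm : 2 ≤ m) {i : Fin (m + 1)} (h0 : i ≠ 0)
    (h2 : i ≠ ⟨2, by omega⟩) : ∃ a, targetIndex hm a = i := by
  have h0' : (i : ℕ) ≠ 0 := fun h => h0 (Fin.ext h)
  have h2' : (i : ℕ) ≠ 2 := fun h => h2 (Fin.ext h)
  refine ⟨⟨i - 2, by have := i.isLt; omega⟩, Fin.ext ?_⟩
  rw [targetIndex_val]
  simp only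
  split_ifs <;> omega

lemma exists_sourceIndex_eq {m : ℕ} {i : Fin (m + 1)} (h : 2 ≤ (i : ℕ)) :
    ∃ b, sourceIndex b = i :=
  ⟨⟨i - 2, by have := i.isLt; omega⟩, Fin.ext (by simp only [sourceIndex]; omega)⟩

/-- The generators, indexed. -/
noncomputable def family {m : ℕ} (n : ℕ) (hm : 2 ≤ m) :
    (Fin 4 ⊕ Fin m ⊕ Fin (n - 1) ⊕ (Fin (m - 1) × Fin n) ⊕ (Fin (m - 1) × Fin (m - 1))) →
      ((Fin (m + 1) → ℝ) → (Fin (m + 1) → ℝ)) :=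
  Sum.elim
    ![powField 0 0 0, timeScaling 0 ⟨1, by omega⟩ n, weightScaling ⟨1, by omega⟩ ⟨2, by omega⟩,
      mixedField 0 ⟨1, by omega⟩ ⟨2, by omega⟩ n]
    (Sum.elim (fun c => powField 0 c.succ 0)
      (Sum.elim (fun i => powField 0 ⟨2, by omega⟩ ((i : ℕ) + 1))
        (Sum.elim (fun q => powField 0 (targetIndex hm q.1) ((q.2 : ℕ) + 1))
          (fun q => linField (sourceIndex q.1) (targetIndex hm q.2)))))

lemma range_family {m : ℕ} (n : ℕ) (hm : 2 ≤ m) (hn : 3 ≤ n) :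
    Set.range (family n hm) =
      {X | Generator (0 : Fin (m + 1)) ⟨1, by omega⟩ ⟨2, by omega⟩ n X} := by
  ext X
  constructor
  · rintro ⟨i | c | i | ⟨a, j⟩ | ⟨b, a⟩, rfl⟩
    · fin_cases i
      exacts [.time, .timeScaling, .weightScaling, .mixed]
    · exact .pow c.succ 0 (Fin.succ_ne_zero c) (by omega) (by omega)
    · exact .pow _ _ (by simp [Fin.ext_iff]) (by omega) (by omega)
    · exact .pow _ _ (targetIndex_ne_zero hm a) (by omega)
        fun h => absurd h (targetIndex_ne_two hm a)
    · exact .lin _ _ (by simp [sourceIndex, Fin.ext_iff]) (by simp [sourceIndex])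
        (targetIndex_ne_zero hm a) (targetIndex_ne_two hm a)
  · intro hX
    cases hX with
    | time => exact ⟨.inl 0, rfl⟩
    | timeScaling => exact ⟨.inl 1, rfl⟩
    | weightScaling => exact ⟨.inl 2, rfl⟩
    | mixed => exact ⟨.inl 3, rfl⟩
    | pow a k ha hk hy =>
      rcases k with - | k
      · obtain ⟨c, rfl⟩ := Fin.exists_succ_eq.2 ha
        exact ⟨.inr (.inl c), rfl⟩
      · by_cases h : a = ⟨2, by omega⟩
        · have := hy h
          subst h
          exact ⟨.inr (.inr (.inl ⟨k, by omega⟩)), rfl⟩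
        · obtain ⟨a, rfl⟩ := exists_targetIndex_eq hm ha h
          exact ⟨.inr (.inr (.inr (.inl (a, ⟨k, by omega⟩)))), rfl⟩
    | lin b a hbo hbx hao hay =>
      have h0 : (b : ℕ) ≠ 0 := fun h => hbo (Fin.ext h)
      have h1 : (b : ℕ) ≠ 1 := fun h => hbx (Fin.ext h)
      obtain ⟨b, rfl⟩ := exists_sourceIndex_eq (i := b) (by omega)
      obtain ⟨a, rfl⟩ := exists_targetIndex_eq hm hao hay
      exact ⟨.inr (.inr (.inr (.inr (b, a)))), rfl⟩

lemma linearIndependent_family {m : ℕ} (n : ℕ) (hm : 2 ≤ m) (hn : 3 ≤ n) :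
    LinearIndependent ℝ (family n hm) := by
  rw [Fintype.linearIndependent_iff]
  intro g hg
  set x : Fin (m + 1) := ⟨1, by omega⟩ with hx
  set y : Fin (m + 1) := ⟨2, by omega⟩ with hy
  have hx0 : x ≠ 0 := by simp [hx, Fin.ext_iff]
  have hy0 : y ≠ 0 := by simp [hy, Fin.ext_iff]
  have hxy : x ≠ y := by simp [hx, hy]
  have key : ∀ (p : Fin (m + 1) → ℝ) (i : Fin (m + 1)),
      (g (.inl 0) * powField 0 0 0 p i + g (.inl 1) * timeScaling 0 x n p i +
        g (.inl 2) * weightScaling x y p i + g (.inl 3) * mixedField 0 x y n p i) +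
      ((∑ c, g (.inr (.inl c)) * powField 0 c.succ 0 p i) +
      ((∑ j, g (.inr (.inr (.inl j))) * powField 0 y ((j : ℕ) + 1) p i) +
      ((∑ a, ∑ j, g (.inr (.inr (.inr (.inl (a, j))))) *
        powField 0 (targetIndex hm a) ((j : ℕ) + 1) p i) +
      (∑ b, ∑ a, g (.inr (.inr (.inr (.inr (b, a))))) *
        linField (sourceIndex b) (targetIndex hm a) p i)))) = 0 := by
    intro p i
    have h := congrFun (congrFun hg p) i
    simpa [Fintype.sum_sum_type, Fintype.sum_prod_type, Fin.sum_univ_four, family,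
      Finset.sum_apply] using h
  -- the `∂_t` component
  have ht : ∀ s : ℝ, g (.inl 0) + g (.inl 1) * s = 0 := by
    intro s
    have h := key (Pi.single 0 s) 0
    simpa [powField, linField, timeScaling, weightScaling, mixedField, Pi.single_apply, hx0.symm,
      hy0.symm, (targetIndex_ne_zero hm _).symm, (Fin.succ_ne_zero _).symm] using h
  have g0 : g (.inl 0) = 0 := by simpa using ht 0
  have g1 : g (.inl 1) = 0 := by simpa [g0] using ht 1
  -- the `∂_{u^a}` components, `a ≠ 2`
  have ha : ∀ (a : Fin (m - 1)) (c : Fin m), c.succ = targetIndex hm a →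
      ∀ p : Fin (m + 1) → ℝ,
      (if targetIndex hm a = x then g (.inl 2) * (2 * p x) + g (.inl 3) * (2 * p 0 * p y) else 0) +
        (g (.inr (.inl c)) +
        ((∑ j : Fin n, g (.inr (.inr (.inr (.inl (a, j))))) * p 0 ^ ((j : ℕ) + 1)) +
        (∑ b, g (.inr (.inr (.inr (.inr (b, a))))) * p (sourceIndex b)))) = 0 := by
    intro a c hca p
    have h := key p (targetIndex hm a)
    have hc : ∀ c' : Fin m, targetIndex hm a = c'.succ ↔ c = c' := fun c' => by
      rw [← hca, Fin.succ_inj]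
    have hsum : ∀ (f : Fin (m - 1) → Fin n → ℝ), (∑ a', ∑ j, f a' j *
        powField 0 (targetIndex hm a') ((j : ℕ) + 1) p (targetIndex hm a)) =
        ∑ j, f a j * p 0 ^ ((j : ℕ) + 1) := by
      intro f
      rw [Finset.sum_eq_single a]
      · simp [powField]
      · intro a' _ h'
        simp [powField, (targetIndex_injective hm).eq_iff, h'.symm]
      · simp
    rw [hsum fun a' j => g (.inr (.inr (.inr (.inl (a', j)))))] at h
    have hay : targetIndex hm a ≠ y := targetIndex_ne_two hm a
    by_cases hax : targetIndex hm a = x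
    · simp only [powField, linField, timeScaling, weightScaling, mixedField, Pi.add_apply,
        Pi.sub_apply, Pi.smul_apply, Pi.single_apply, targetIndex_ne_zero, hay, hc,
        (targetIndex_injective hm).eq_iff, g0, g1] at h
      simpa [-Fin.mk_one, mul_add, mul_ite, hax] using h
    · simp only [powField, linField, timeScaling, weightScaling, mixedField, Pi.add_apply,
        Pi.sub_apply, Pi.smul_apply, Pi.single_apply, targetIndex_ne_zero, hay, hc,
        (targetIndex_injective hm).eq_iff, g0, g1] at h
      simpa [-Fin.mk_one, mul_add, mul_ite, hax] using h
  -- the `∂_{u²}` component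
  have hu : ∀ (c : Fin m), c.succ = y → ∀ p : Fin (m + 1) → ℝ,
      g (.inl 2) * p y + g (.inl 3) * (((n : ℝ) + 1) * p 0 ^ n / (n.factorial : ℝ)) +
      (g (.inr (.inl c)) +
        ∑ j : Fin (n - 1), g (.inr (.inr (.inl j))) * p 0 ^ ((j : ℕ) + 1)) = 0 := by
    intro c hcy p
    have h := key p y
    have hc : ∀ c' : Fin m, y = c'.succ ↔ c = c' := fun c' => by
      rw [← hcy, Fin.succ_inj]
    have hya : ∀ a, y ≠ targetIndex hm a := fun a => (targetIndex_ne_two hm a).symm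
    simpa [powField, linField, timeScaling, weightScaling, mixedField, Pi.single_apply, hx0, hy0,
      hxy.symm, hc, hya, g0, g1, -Fin.mk_one] using h
  have hs0 : ∀ b : Fin (m - 1), sourceIndex b ≠ 0 := fun b => by simp [sourceIndex, Fin.ext_iff]
  have hsx : ∀ b : Fin (m - 1), x ≠ sourceIndex b := fun b => by simp [hx, sourceIndex]
  have hpow : ∀ (a : Fin (m - 1)) (c : Fin m), c.succ = targetIndex hm a →
      g (.inr (.inl c)) = 0 ∧ ∀ j, g (.inr (.inr (.inr (.inl (a, j))))) = 0 := by
    intro a c hca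
    refine eq_zero_of_forall_sum_pow_eq_zero fun s => ?_
    simpa [-Fin.mk_one, hx0, hy0, hs0] using ha a c hca (Pi.single 0 s)
  have hlin : ∀ b a, g (.inr (.inr (.inr (.inr (b, a))))) = 0 := by
    intro b a
    obtain ⟨c, hca⟩ := Fin.exists_succ_eq.2 (targetIndex_ne_zero hm a)
    simpa [-Fin.mk_one, hsx, (hs0 _).symm, hpow a c hca, Pi.single_apply,
      sourceIndex_injective.eq_iff] using ha a c hca (Pi.single (sourceIndex b) 1)
  obtain ⟨cy, hcy⟩ := Fin.exists_succ_eq.2 hy0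
  have hn0 : n ≠ 0 := by omega
  have gcy : g (.inr (.inl cy)) = 0 := by simpa [hn0] using hu cy hcy 0
  have g2 : g (.inl 2) = 0 := by
    simpa [-Fin.mk_one, hn0, gcy, hy0.symm] using hu cy hcy (Pi.single y 1)
  have g3 : g (.inl 3) = 0 := by
    obtain ⟨a, hax⟩ := exists_targetIndex_eq hm hx0 hxy
    obtain ⟨c, hca⟩ := Fin.exists_succ_eq.2 (targetIndex_ne_zero hm a)
    simpa [-Fin.mk_one, hax, g2, hpow a c hca, hlin] using ha a c hca 1
  have hpowy : ∀ j, g (.inr (.inr (.inl j))) = 0 := by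
    refine (eq_zero_of_forall_sum_pow_eq_zero (c := g (.inr (.inl cy))) fun s => ?_).2
    simpa [-Fin.mk_one, g2, g3] using hu cy hcy (Pi.single 0 s)
  rintro (i | c | j | ⟨a, j⟩ | ⟨b, a⟩)
  · fin_cases i
    exacts [g0, g1, g2, g3]
  · by_cases h : c.succ = y
    · rwa [Fin.succ_injective _ (h.trans hcy.symm)]
    · obtain ⟨a, hac⟩ := exists_targetIndex_eq hm (Fin.succ_ne_zero c) h
      exact (hpow a c hac.symm).1
  · exact hpowy j
  · obtain ⟨c, hca⟩ := Fin.exists_succ_eq.2 (targetIndex_ne_zero hm a)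
    exact (hpow a c hca).2 j
  · exact hlin b a

end PointSymmetry

/-- The point symmetries of the vector ODE `u^a_{n+1} = (u²_n)² δ^a_1` on
`ℝ^{1+m}` with coordinates `(t, u¹, …, u^m) = (p 0, p 1, …, p m)`:
`∂_t`; `∂_{u^c}` (all `c`); `t^i ∂_{u²}` (`1 ≤ i ≤ n−1`); `t^j ∂_{u^a}`
(`a ≠ 2`, `1 ≤ j ≤ n`); `u^b ∂_{u^a}` (`b ≠ 1`, `a ≠ 2`);
`t∂_t − (n−1)u¹∂_{u¹}`; `2u¹∂_{u¹} + u²∂_{u²}`; `2tu²∂_{u¹} + ((n+1)tⁿ/n!)∂_{u²}`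
are linearly independent and span a Lie algebra of vector fields of dimension
`m² + (n+1)m + 3 − (2m − 1)`. Indices `a ≠ 2` are parametrized by `Fin (m−1)`
(`0 ↦ u¹`, `l ↦ u^{l+2}` for `l ≥ 1`), indices `b ≠ 1` by `Fin (m−1)` (`b ↦ u^{b+2}`). -/
theorem stmt16 (n m : ℕ) (hn : 3 ≤ n) (hm : 2 ≤ m)
    (V : (Fin 4 ⊕ Fin m ⊕ Fin (n - 1) ⊕ (Fin (m - 1) × Fin n) ⊕ (Fin (m - 1) × Fin (m - 1))) →
      ((Fin (m + 1) → ℝ) → (Fin (m + 1) → ℝ)))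
    (h0 : V (Sum.inl 0) = fun _ => Pi.single (0 : Fin (m + 1)) 1)
    (h1 : V (Sum.inl 1) = fun p =>
        (Pi.single (0 : Fin (m + 1)) (p 0) : Fin (m + 1) → ℝ)
        - ((n : ℝ) - 1) •
          (Pi.single (⟨1, by omega⟩ : Fin (m + 1)) (p ⟨1, by omega⟩) : Fin (m + 1) → ℝ))
    (h2 : V (Sum.inl 2) = fun p =>
        (2 : ℝ) •
          (Pi.single (⟨1, by omega⟩ : Fin (m + 1)) (p ⟨1, by omega⟩) : Fin (m + 1) → ℝ)
          + (Pi.single (⟨2, by omega⟩ : Fin (m + 1)) (p ⟨2, by omega⟩) : Fin (m + 1) → ℝ))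
    (h3 : V (Sum.inl 3) = fun p =>
        (Pi.single (⟨1, by omega⟩ : Fin (m + 1)) (2 * p 0 * p ⟨2, by omega⟩)
            : Fin (m + 1) → ℝ)
          + (Pi.single (⟨2, by omega⟩ : Fin (m + 1))
              (((n : ℝ) + 1) * (p 0) ^ n / (n.factorial : ℝ)) : Fin (m + 1) → ℝ))
    (hc : ∀ c : Fin m, V (Sum.inr (Sum.inl c)) = fun _ => Pi.single c.succ 1)
    (hti : ∀ i : Fin (n - 1), V (Sum.inr (Sum.inr (Sum.inl i))) =
        fun p => Pi.single (⟨2, by omega⟩ : Fin (m + 1)) ((p 0) ^ ((i : ℕ) + 1)))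
    (htj : ∀ (a : Fin (m - 1)) (j : Fin n),
        V (Sum.inr (Sum.inr (Sum.inr (Sum.inl (a, j))))) =
        fun p => Pi.single
          (if (a : ℕ) = 0 then (⟨1, by omega⟩ : Fin (m + 1))
            else ⟨(a : ℕ) + 2, by have := a.isLt; omega⟩)
          ((p 0) ^ ((j : ℕ) + 1)))
    (hub : ∀ b a : Fin (m - 1),
        V (Sum.inr (Sum.inr (Sum.inr (Sum.inr (b, a))))) =
        fun p => Pi.single
          (if (a : ℕ) = 0 then (⟨1, by omega⟩ : Fin (m + 1))
            else ⟨(a : ℕ) + 2, by have := a.isLt; omega⟩)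
          (p ⟨(b : ℕ) + 2, by have := b.isLt; omega⟩)) :
    LinearIndependent ℝ V ∧
    (∀ X ∈ Submodule.span ℝ (Set.range V), ∀ Y ∈ Submodule.span ℝ (Set.range V),
      vbracket X Y ∈ Submodule.span ℝ (Set.range V)) ∧
    Module.finrank ℝ (Submodule.span ℝ (Set.range V))
      = m ^ 2 + (n + 1) * m + 3 - (2 * m - 1) := by
  have hV : V = PointSymmetry.family n hm := by
    funext i
    rcases i with i | c | i | ⟨a, j⟩ | ⟨b, a⟩
    · fin_cases i
      exacts [h0.trans (PointSymmetry.powField_zero 0 0).symm, h1, h2, h3]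
    exacts [(hc c).trans (PointSymmetry.powField_zero 0 c.succ).symm, hti i, htj a j, hub b a]
  clear h0 h1 h2 h3 hc hti htj hub
  subst hV
  have hli := PointSymmetry.linearIndependent_family n hm hn
  refine ⟨hli, fun X hX Y hY => ?_, ?_⟩
  · rw [PointSymmetry.range_family n hm hn] at hX hY ⊢
    exact PointSymmetry.lieBracket_mem_span (fun Z hZ => hZ.differentiable)
      (fun Z hZ Z' hZ' => hZ.lieBracket_mem hn (by simp [Fin.ext_iff]) (by simp [Fin.ext_iff])
        (by simp) hZ') hX hY
  · rw [finrank_span_eq_card hli]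
    obtain ⟨k, rfl⟩ : ∃ k, m = k + 1 := ⟨m - 1, by omega⟩
    obtain ⟨l, rfl⟩ : ∃ l, n = l + 1 := ⟨n - 1, by omega⟩
    simp only [Fintype.card_sum, Fintype.card_prod, Fintype.card_fin, Nat.add_sub_cancel]
    refine (Nat.sub_eq_of_eq_add ?_).symm
    rw [show 2 * (k + 1) - 1 = 2 * k + 1 by omega]
    ring
end
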